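/- arXiv:1907.06317 — 7 statements merged into one kernel-verified Lean document; each statement's English description precedes it below -/
import Mathlib

section
/- Let B be a k×m real matrix, C a k×p real matrix, and d ∈ ℝ^k. Let P = {h ∈ ℝ^k : h ≥ 0 componentwise, C'h = 0, 1'h = 1} and let V be the set of extreme points of P. Then V is a finite set, and for every μ ∈ ℝ^m the following are equivalent: (i) there exists δ ∈ ℝ^p with Cδ ≥ Bμ − d componentwise; (ii) h'Bμ ≤ h'd for every h ∈ V. -/
/-!
By Farkas' lemma, `Cδ ≥ b` is solvable iff `h ⬝ᵥ b ≤ 0` for every `h ≥ 0` with `Cᵀh = 0`; here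
`b = Bμ - d`. Such an `h` is zero or a positive multiple of a point of `P`, so it is enough to test
`h ∈ P`. As `P` is compact and convex, Krein–Milman says it is the closed convex hull of its
extreme points, and a closed half-space containing these contains `P`.

The cone version of Farkas' lemma in Mathlib needs a closed cone, so the matrix version
`farkas_mulVec` is proved instead by Fourier–Motzkin elimination (`fourierMotzkin`): the first
unknown is eliminated by nonnegative combinations of the inequalities, and a certificate for the
reduced system pulls back to one for the original system.

Finiteness of the set of extreme points: an extreme point `x` of `P` equals every `y ∈ P` whose
support is contained in that of `x`, because the segment from `y` to `x` can be prolonged slightly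
beyond `x` inside `P`. So extreme points are determined by their supports.
-/

open Matrix

/-- A finite family of lower bounds and a finite family of upper bounds, every lower bound being at
most every upper bound, leave room for a number in between; either family may be empty. -/
lemma exists_between_of_finite {ι : Type} [Fintype ι] (S T : ι → Prop) (q : ι → ℝ)
    (hq : ∀ i j, S i → T j → q i ≤ q j) :
    ∃ x, (∀ i, S i → q i ≤ x) ∧ ∀ j, T j → x ≤ q j := by
  classical
  by_cases hne : (Finset.univ.filter S).Nonempty
  · obtain ⟨i, hi, hmax⟩ := Finset.exists_max_image _ q hne
    simp only [Finset.mem_filter, Finset.mem_univ, true_and] at hi hmax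
    exact ⟨q i, hmax, fun j hj => hq i j hi hj⟩
  · obtain ⟨x, hx⟩ := (Set.finite_range q).bddBelow
    refine ⟨x, fun i hi => (hne ⟨i, by simpa using hi⟩).elim, fun j _ => hx ⟨j, rfl⟩⟩

/-- The multipliers of one Fourier–Motzkin elimination step for an unknown with coefficients `a`.
Row `inl i` keeps inequality `i` if `a i = 0`; row `inr (i, j)` adds `-a j` times inequality `i` to
`a i` times inequality `j` if `a i > 0 > a j`. The remaining rows are zero. -/
noncomputable def fourierMotzkin {ι : Type} (a : ι → ℝ) : Matrix (ι ⊕ ι × ι) ι ℝ :=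
  open Classical in fun r => match r with
    | .inl i => if a i = 0 then Pi.single i 1 else 0
    | .inr (i, j) => if 0 < a i ∧ a j < 0 then -a j • Pi.single i 1 + a i • Pi.single j 1 else 0

lemma fourierMotzkin_nonneg {ι : Type} (a : ι → ℝ) (r : ι ⊕ ι × ι) (l : ι) :
    0 ≤ fourierMotzkin a r l := by
  classical
  have hs : ∀ i : ι, 0 ≤ (Pi.single i 1 : ι → ℝ) l := fun i => by
    rw [Pi.single_apply]; split_ifs <;> norm_num
  rcases r with i | ⟨i, j⟩
  · simp only [fourierMotzkin]
    split_ifs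
    · convert hs i
    · simp
  · simp only [fourierMotzkin]
    split_ifs with h
    · have h1 := mul_nonneg (neg_nonneg.2 h.2.le) (hs i)
      have h2 := mul_nonneg h.1.le (hs j)
      simp only [Pi.add_apply, Pi.smul_apply, smul_eq_mul]
      convert add_nonneg h1 h2
    · simp

lemma fourierMotzkin_mulVec_inl {ι : Type} [Fintype ι] {a : ι → ℝ} (y : ι → ℝ) {i : ι}
    (h : a i = 0) : (fourierMotzkin a *ᵥ y) (.inl i) = y i := by
  classical
  simp [Matrix.mulVec, fourierMotzkin, h]

lemma fourierMotzkin_mulVec_inr {ι : Type} [Fintype ι] {a : ι → ℝ} (y : ι → ℝ) {i j : ι}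
    (hi : 0 < a i) (hj : a j < 0) :
    (fourierMotzkin a *ᵥ y) (.inr (i, j)) = -a j * y i + a i * y j := by
  classical
  have h : fourierMotzkin a (.inr (i, j)) = -a j • Pi.single i 1 + a i • Pi.single j 1 := by
    ext l
    simp only [fourierMotzkin, hi, hj, and_self, if_true]
  rw [Matrix.mulVec, h, add_dotProduct, smul_dotProduct, smul_dotProduct,
    single_one_dotProduct, single_one_dotProduct, smul_eq_mul, smul_eq_mul]

/-- The unknown with coefficients `a` disappears from the reduced system. -/
lemma fourierMotzkin_mulVec_self {ι : Type} [Fintype ι] (a : ι → ℝ) :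
    fourierMotzkin a *ᵥ a = 0 := by
  classical
  ext r
  rcases r with i | ⟨i, j⟩
  · by_cases h : a i = 0
    · simpa [h] using fourierMotzkin_mulVec_inl a h
    · simp [Matrix.mulVec, fourierMotzkin, h]
  · by_cases h : 0 < a i ∧ a j < 0
    · rw [fourierMotzkin_mulVec_inr a h.1 h.2]; simp; ring
    · simp [Matrix.mulVec, fourierMotzkin, h]

/-- **Farkas' lemma** for a system of linear inequalities `Cδ ≥ b`. -/
lemma farkas_mulVec (p : ℕ) : ∀ {ι : Type} [Fintype ι] (C : Matrix ι (Fin p) ℝ) (b : ι → ℝ),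
    (∀ h : ι → ℝ, (∀ i, 0 ≤ h i) → h ᵥ* C = 0 → h ⬝ᵥ b ≤ 0) →
    ∃ δ : Fin p → ℝ, ∀ i, b i ≤ (C *ᵥ δ) i := by
  induction p with
  | zero =>
    intro ι _ C b H
    classical
    refine ⟨0, fun i => ?_⟩
    have := H (Pi.single i 1)
      (fun l => by rw [Pi.single_apply]; split_ifs <;> norm_num) (Subsingleton.elim _ _)
    simpa using this
  | succ p ih =>
    intro ι _ C b H
    set a : ι → ℝ := fun i => C i 0 with ha
    set D : Matrix ι (Fin p) ℝ := fun i j => C i j.succ with hD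
    obtain ⟨δ, hδ⟩ := ih (fourierMotzkin a * D) (fourierMotzkin a *ᵥ b) (by
      intro h hh h0
      -- `h ᵥ* fourierMotzkin a` is a certificate for the original system.
      rw [dotProduct_mulVec]
      refine H _ (fun l => Finset.sum_nonneg fun r _ =>
        mul_nonneg (hh r) (fourierMotzkin_nonneg a r l)) ?_
      ext j
      refine Fin.cases ?_ (fun j => ?_) j
      · change (h ᵥ* fourierMotzkin a) ⬝ᵥ a = 0
        rw [← dotProduct_mulVec, fourierMotzkin_mulVec_self, dotProduct_zero]
      · rw [← vecMul_vecMul] at h0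
        exact congrFun h0 j)
    rw [← mulVec_mulVec] at hδ
    set y := D *ᵥ δ with hy
    -- The inequalities with `a i ≠ 0` bound the first unknown by `(b i - y i) / a i`.
    obtain ⟨x, hx1, hx2⟩ := exists_between_of_finite (fun i => 0 < a i) (fun i => a i < 0)
      (fun i => (b i - y i) / a i) (by
        intro i j hi hj
        have h := hδ (.inr (i, j))
        rw [fourierMotzkin_mulVec_inr b hi hj, fourierMotzkin_mulVec_inr y hi hj] at h
        rw [div_le_iff₀ hi, div_mul_eq_mul_div, le_div_iff_of_neg hj]
        linarith)
    refine ⟨Fin.cons x δ, fun i => ?_⟩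
    have key : (C *ᵥ (Fin.cons x δ : Fin (p + 1) → ℝ)) i = a i * x + y i := by
      simp [Matrix.mulVec, dotProduct, Fin.sum_univ_succ, ha, hy, hD]
    rw [key]
    rcases lt_trichotomy (a i) 0 with h | h | h
    · have := hx2 i h
      rw [le_div_iff_of_neg h] at this
      linarith
    · have := hδ (.inl i)
      rw [fourierMotzkin_mulVec_inl b h, fourierMotzkin_mulVec_inl y h] at this
      rw [h]; linarith
    · have := hx1 i h
      rw [div_le_iff₀ h] at this
      linarith

/-- The polytope `{h ≥ 0 : Cᵀh = 0, 𝟙ᵀh = 1}`. -/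
def certPolytope {k p : ℕ} (C : Matrix (Fin k) (Fin p) ℝ) : Set (Fin k → ℝ) :=
  {h | (∀ i, 0 ≤ h i) ∧ Cᵀ *ᵥ h = 0 ∧ ∑ i, h i = 1}

lemma certPolytope_eq {k p : ℕ} (C : Matrix (Fin k) (Fin p) ℝ) :
    certPolytope C = stdSimplex ℝ (Fin k) ∩ (LinearMap.ker Cᵀ.mulVecLin : Set (Fin k → ℝ)) := by
  ext h
  simp only [certPolytope, stdSimplex, Set.mem_ofPred_eq, Set.mem_inter_iff, SetLike.mem_coe,
    LinearMap.mem_ker, mulVecLin_apply]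
  tauto

lemma isCompact_certPolytope {k p : ℕ} (C : Matrix (Fin k) (Fin p) ℝ) :
    IsCompact (certPolytope C) := by
  rw [certPolytope_eq]
  exact (isCompact_stdSimplex ℝ (Fin k)).inter_right (Submodule.closed_of_finiteDimensional _)

lemma convex_certPolytope {k p : ℕ} (C : Matrix (Fin k) (Fin p) ℝ) :
    Convex ℝ (certPolytope C) := by
  rw [certPolytope_eq]
  exact (convex_stdSimplex ℝ (Fin k)).inter (Submodule.convex _)

/-- An extreme point `x` is the only point of the polytope whose support lies in that of `x`. -/
lemma eq_of_support_subset {k p : ℕ} {C : Matrix (Fin k) (Fin p) ℝ} {x y : Fin k → ℝ}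
    (hx : x ∈ (certPolytope C).extremePoints ℝ) (hy : y ∈ certPolytope C)
    (hs : Function.support y ⊆ Function.support x) : x = y := by
  obtain ⟨hx0, hxC, hx1⟩ := hx.1
  obtain ⟨hy0, hyC, hy1⟩ := id hy
  have hev : ∀ i, ∀ᶠ ε in nhdsWithin (0 : ℝ) (Set.Ioi 0), ε * y i ≤ x i := by
    intro i
    by_cases h : x i = 0
    · have : y i = 0 := by_contra fun h' => hs h' h
      simp [h, this]
    · have hpos : (0 : ℝ) * y i < x i := by
        simpa using lt_of_le_of_ne (hx0 i) (Ne.symm h)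
      have hc : Filter.Tendsto (fun ε : ℝ => ε * y i) (nhdsWithin 0 (Set.Ioi 0))
          (nhds (0 * y i)) :=
        ((continuous_id.mul continuous_const).tendsto 0).mono_left nhdsWithin_le_nhds
      exact (hc.eventually_lt_const hpos).mono fun _ h => h.le
  obtain ⟨ε, hε, hpos⟩ := ((Filter.eventually_all.2 hev).and self_mem_nhdsWithin).exists
  have hpos : 0 < ε := hpos
  -- `z` lies on the line through `y` and `x`, slightly beyond `x`.
  set z : Fin k → ℝ := (1 + ε) • x - ε • y with hz
  have hzP : z ∈ certPolytope C := by
    refine ⟨fun i => ?_, ?_, ?_⟩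
    · have h1 := hε i
      have h2 := mul_nonneg hpos.le (hx0 i)
      simp only [hz, Pi.sub_apply, Pi.smul_apply, smul_eq_mul]
      linarith
    · rw [hz, mulVec_sub, mulVec_smul, mulVec_smul, hxC, hyC]; simp
    · simp [hz, Finset.sum_sub_distrib, ← Finset.mul_sum, hx1, hy1]
  have hseg : x ∈ openSegment ℝ y z := by
    refine ⟨ε / (1 + ε), 1 / (1 + ε), by positivity, by positivity, by field_simp; ring, ?_⟩
    ext i
    simp only [hz, Pi.add_apply, Pi.sub_apply, Pi.smul_apply, smul_eq_mul]
    field_simp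
    ring
  exact (hx.2 hy hzP hseg).symm

lemma finite_extremePoints_certPolytope {k p : ℕ} (C : Matrix (Fin k) (Fin p) ℝ) :
    ((certPolytope C).extremePoints ℝ).Finite := by
  refine Set.Finite.of_finite_image (f := Function.support) (Set.toFinite _) ?_
  intro x hx y hy h
  exact eq_of_support_subset hx hy.1 (le_of_eq h.symm)

/-- A linear inequality valid at the extreme points of the polytope is valid on the cone
`{h ≥ 0 : Cᵀh = 0}` over it. -/
lemma dotProduct_nonpos_of_extremePoints {k p : ℕ} {C : Matrix (Fin k) (Fin p) ℝ}
    {b : Fin k → ℝ} (hb : ∀ h ∈ (certPolytope C).extremePoints ℝ, h ⬝ᵥ b ≤ 0)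
    {h : Fin k → ℝ} (h0 : ∀ i, 0 ≤ h i) (hC : h ᵥ* C = 0) : h ⬝ᵥ b ≤ 0 := by
  have hP : certPolytope C ⊆ {h | h ⬝ᵥ b ≤ 0} := by
    rw [← closure_convexHull_extremePoints (isCompact_certPolytope C) (convex_certPolytope C)]
    refine closure_minimal (convexHull_min hb ?_) ?_
    · intro u hu v hv s t hs ht _
      simp only [Set.mem_ofPred_eq] at hu hv ⊢
      rw [add_dotProduct, smul_dotProduct, smul_dotProduct, smul_eq_mul, smul_eq_mul]
      have := mul_nonpos_of_nonneg_of_nonpos hs hu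
      have := mul_nonpos_of_nonneg_of_nonpos ht hv
      linarith
    · exact isClosed_le (by unfold dotProduct; fun_prop) continuous_const
  rcases (Finset.sum_nonneg fun i _ => h0 i : 0 ≤ ∑ i, h i).eq_or_lt with hs | hs
  · have : h = 0 := by
      ext i
      exact (Finset.sum_eq_zero_iff_of_nonneg fun i _ => h0 i).1 hs.symm i (Finset.mem_univ i)
    simp [this]
  · have hmem : (∑ i, h i)⁻¹ • h ∈ certPolytope C := by
      refine ⟨fun i => mul_nonneg (inv_nonneg.2 hs.le) (h0 i), ?_, ?_⟩
      · rw [mulVec_smul, mulVec_transpose, hC, smul_zero]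
      · simp only [Pi.smul_apply, smul_eq_mul, ← Finset.mul_sum]
        exact inv_mul_cancel₀ hs.ne'
    have := hP hmem
    rw [Set.mem_ofPred_eq, smul_dotProduct, smul_eq_mul] at this
    exact nonpos_of_mul_nonpos_right this (inv_pos.2 hs)

/-- (Elimination of the nuisance parameter.) Let `B` be `k×m`, `C` be
`k×p`, `d ∈ ℝ^k`, let `P = {h ∈ ℝ^k : h ≥ 0, Cᵀh = 0, 𝟙ᵀh = 1}` and let `V` be the set of
extreme points of `P`. Then `V` is finite and, for every `μ ∈ ℝ^m`,
`∃ δ, Cδ ≥ Bμ - d` iff `hᵀBμ ≤ hᵀd` for every `h ∈ V`. -/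
theorem statement6 {k m p : ℕ}
    (B : Matrix (Fin k) (Fin m) ℝ) (C : Matrix (Fin k) (Fin p) ℝ) (d : Fin k → ℝ)
    (P : Set (Fin k → ℝ))
    (hP : P = {h | (∀ i, 0 ≤ h i) ∧ Cᵀ *ᵥ h = 0 ∧ ∑ i, h i = 1})
    (V : Set (Fin k → ℝ)) (hV : V = Set.extremePoints ℝ P) :
    V.Finite ∧
      ∀ μ : Fin m → ℝ,
        (∃ δ : Fin p → ℝ, ∀ i, (B *ᵥ μ) i - d i ≤ (C *ᵥ δ) i) ↔
          ∀ h ∈ V, h ⬝ᵥ (B *ᵥ μ) ≤ h ⬝ᵥ d := by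
  obtain rfl : P = certPolytope C := hP
  subst hV
  refine ⟨finite_extremePoints_certPolytope C, fun μ => ⟨?_, fun H => ?_⟩⟩
  · rintro ⟨δ, hδ⟩ h hh
    obtain ⟨h0, hC, -⟩ := hh.1
    have h1 : h ⬝ᵥ (B *ᵥ μ - d) ≤ h ⬝ᵥ (C *ᵥ δ) :=
      Finset.sum_le_sum fun i _ => mul_le_mul_of_nonneg_left (hδ i) (h0 i)
    rw [dotProduct_mulVec h C, ← mulVec_transpose, hC, zero_dotProduct, dotProduct_sub] at h1
    linarith
  · refine farkas_mulVec p C (B *ᵥ μ - d) fun h h0 hC =>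
      dotProduct_nonpos_of_extremePoints (fun v hv => ?_) h0 hC
    rw [dotProduct_sub]
    linarith [H v hv]
end

section
/- Let B be a k×m real matrix, C a k×p real matrix, d ∈ ℝ^k, and let V be the set of extreme points of the polyhedron {h ∈ ℝ^k : h ≥ 0, C'h = 0, 1'h = 1}. Fix μ̂ ∈ ℝ^m with h'Bμ̂ ≤ h'd for every h ∈ V. Let V₀ = {h ∈ V : h'Bμ̂ = h'd} and let ℋ = {h ∈ ℝ^k : h ≥ 0 componentwise, C'h = 0, h'(Bμ̂ − d) = 0}. Then the dimension of the linear span of {B'h : h ∈ V₀} equals the dimension of the linear span of {B'h : h ∈ ℋ}. -/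
/-!
Write `c = Bμ̂ - d` and let `P` be the compact convex polytope `{h ≥ 0, Cᵀh = 0, 𝟙ᵀh = 1}`.
By Krein–Milman, `hᵀc ≤ 0` on the extreme points of `P` forces `hᵀc ≤ 0` on all of `P`, so
`F = {h ∈ P : hᵀc = 0}` is a face of `P` and its extreme points are extreme points of `P`, that is,
they lie in `V₀`. Krein–Milman applied to `F` puts `F` in the closed convex hull of `V₀`, hence in
`span V₀`, which is closed because it is finite-dimensional. Every nonzero element of the cone `ℋ`
is a positive multiple of an element of `F`, so `V₀ ⊆ ℋ ⊆ span V₀`, and the spans of the images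
under `Bᵀ` are equal.
-/

open Matrix

/-- The section of the nonnegative orthant cut out by `Cᵀ h = 0` and `𝟙ᵀ h = 1`. -/
def simplexSlice {k p : ℕ} (C : Matrix (Fin k) (Fin p) ℝ) : Set (Fin k → ℝ) :=
  {h | (∀ i, 0 ≤ h i) ∧ Cᵀ *ᵥ h = 0 ∧ ∑ i, h i = 1}

lemma convex_simplexSlice {k p : ℕ} (C : Matrix (Fin k) (Fin p) ℝ) :
    Convex ℝ (simplexSlice C) := by
  rintro x ⟨hx, hx', hx''⟩ y ⟨hy, hy', hy''⟩ a b ha hb hab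
  refine ⟨fun i => ?_, ?_, ?_⟩
  · have := mul_nonneg ha (hx i)
    have := mul_nonneg hb (hy i)
    simp only [Pi.add_apply, Pi.smul_apply, smul_eq_mul]
    linarith
  · rw [mulVec_add, mulVec_smul, mulVec_smul, hx', hy']; simp
  · simp only [Pi.add_apply, Pi.smul_apply, smul_eq_mul, Finset.sum_add_distrib,
      ← Finset.mul_sum, hx'', hy'']
    linarith

lemma isCompact_simplexSlice {k p : ℕ} (C : Matrix (Fin k) (Fin p) ℝ) :
    IsCompact (simplexSlice C) := by
  have hcl : IsClosed {h : Fin k → ℝ | Cᵀ *ᵥ h = 0} :=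
    isClosed_eq (Continuous.matrix_mulVec continuous_const continuous_id) continuous_const
  refine ((isCompact_stdSimplex ℝ (Fin k)).inter_right hcl).of_isClosed_subset ?_ ?_
  · have h1 : IsClosed {h : Fin k → ℝ | ∀ i, 0 ≤ h i} := by
      simp only [Set.ofPred_forall]
      exact isClosed_iInter fun i => isClosed_le continuous_const (continuous_apply i)
    have h2 : IsClosed {h : Fin k → ℝ | ∑ i, h i = 1} :=
      isClosed_eq (by fun_prop) continuous_const
    exact h1.inter (hcl.inter h2)
  · rintro x ⟨h1, h2, h3⟩
    exact ⟨⟨h1, h3⟩, h2⟩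

/-- A linear functional that is nonpositive on the extreme points of a compact convex set is
nonpositive on the whole set (Krein–Milman). -/
lemma dotProduct_nonpos_of_extremePoints_s7 {k : ℕ} {P : Set (Fin k → ℝ)} (hP : IsCompact P)
    (hconv : Convex ℝ P) (c : Fin k → ℝ) (hc : ∀ h ∈ P.extremePoints ℝ, h ⬝ᵥ c ≤ 0) :
    ∀ h ∈ P, h ⬝ᵥ c ≤ 0 := by
  intro h hh
  rw [← closure_convexHull_extremePoints hP hconv] at hh
  have hclosed : IsClosed {h : Fin k → ℝ | h ⬝ᵥ c ≤ 0} :=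
    isClosed_le (Continuous.dotProduct continuous_id continuous_const) continuous_const
  have hcv : Convex ℝ {h : Fin k → ℝ | h ⬝ᵥ c ≤ 0} :=
    convex_halfSpace_le ⟨fun x y => add_dotProduct x y c, fun a x => smul_dotProduct a x c⟩ 0
  exact closure_minimal (convexHull_min hc hcv) hclosed hh

/-- The face of a compact convex set on which a nonpositive functional vanishes is contained in
the span of the extreme points on which the functional vanishes. -/
lemma face_subset_span {k : ℕ} {P : Set (Fin k → ℝ)} (hP : IsCompact P)
    (hconv : Convex ℝ P) (c : Fin k → ℝ) (hc : ∀ h ∈ P, h ⬝ᵥ c ≤ 0) :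
    {h ∈ P | h ⬝ᵥ c = 0} ⊆ (Submodule.span ℝ {h ∈ P.extremePoints ℝ | h ⬝ᵥ c = 0} : Set _) := by
  have hlin : IsLinearMap ℝ (fun h : Fin k → ℝ => h ⬝ᵥ c) :=
    ⟨fun x y => add_dotProduct x y c, fun a x => smul_dotProduct a x c⟩
  have hface : IsExtreme ℝ P {h ∈ P | h ⬝ᵥ c = 0} := by
    refine ⟨fun x hx => hx.1, ?_⟩
    rintro x hx y hy z ⟨hz, hz0⟩ ⟨a, b, ha, hb, hab, rfl⟩
    refine ⟨hx, ?_⟩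
    rw [add_dotProduct, smul_dotProduct, smul_dotProduct, smul_eq_mul, smul_eq_mul] at hz0
    have h1 := hc x hx
    have h2 := hc y hy
    nlinarith [mul_nonneg hb.le (neg_nonneg.2 h2), mul_nonneg ha.le (neg_nonneg.2 h1)]
  have hFc : IsCompact {h ∈ P | h ⬝ᵥ c = 0} :=
    hP.inter_right (isClosed_eq (Continuous.dotProduct continuous_id continuous_const)
      continuous_const)
  have hFconv : Convex ℝ {h ∈ P | h ⬝ᵥ c = 0} := hconv.inter (convex_hyperplane hlin 0)
  intro h hh
  have hh' := hh
  rw [← closure_convexHull_extremePoints hFc hFconv] at hh'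
  refine closure_minimal (convexHull_min ?_ (Submodule.convex _))
    (Submodule.closed_of_finiteDimensional _) hh'
  intro x hx
  exact Submodule.subset_span
    ⟨hface.extremePoints_subset_extremePoints hx, (extremePoints_subset hx).2⟩

theorem statement7 {k m p : ℕ}
    (B : Matrix (Fin k) (Fin m) ℝ) (C : Matrix (Fin k) (Fin p) ℝ) (d : Fin k → ℝ)
    (V : Set (Fin k → ℝ))
    (hV : V = Set.extremePoints ℝ {h | (∀ i, 0 ≤ h i) ∧ Cᵀ *ᵥ h = 0 ∧ ∑ i, h i = 1})
    (μhat : Fin m → ℝ) (hμhat : ∀ h ∈ V, h ⬝ᵥ (B *ᵥ μhat) ≤ h ⬝ᵥ d)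
    (V₀ : Set (Fin k → ℝ)) (hV₀ : V₀ = {h ∈ V | h ⬝ᵥ (B *ᵥ μhat) = h ⬝ᵥ d})
    (H : Set (Fin k → ℝ))
    (hH : H = {h | (∀ i, 0 ≤ h i) ∧ Cᵀ *ᵥ h = 0 ∧ h ⬝ᵥ (B *ᵥ μhat - d) = 0}) :
    Module.finrank ℝ (Submodule.span ℝ ((fun h => Bᵀ *ᵥ h) '' V₀)) =
      Module.finrank ℝ (Submodule.span ℝ ((fun h => Bᵀ *ᵥ h) '' H)) := by
  have hV' : V = (simplexSlice C).extremePoints ℝ := hV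
  have hc := dotProduct_nonpos_of_extremePoints_s7 (isCompact_simplexSlice C)
    (convex_simplexSlice C) (B *ᵥ μhat - d) (fun h hh => by
      rw [dotProduct_sub]; exact sub_nonpos.2 (hμhat h (hV' ▸ hh)))
  have hF := face_subset_span (isCompact_simplexSlice C) (convex_simplexSlice C) _ hc
  have hV₀' : V₀ = {h ∈ (simplexSlice C).extremePoints ℝ | h ⬝ᵥ (B *ᵥ μhat - d) = 0} := by
    rw [hV₀, hV']
    ext h
    simp only [Set.mem_ofPred_eq, dotProduct_sub, sub_eq_zero]
  rw [← hV₀'] at hF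
  have hsub : V₀ ⊆ H := by
    rw [hV₀', hH]
    rintro h ⟨hh, h0⟩
    exact ⟨(extremePoints_subset hh).1, (extremePoints_subset hh).2.1, h0⟩
  have hsup : H ⊆ Submodule.span ℝ V₀ := by
    intro h hh
    obtain ⟨h1, h2, h3⟩ : (∀ i, 0 ≤ h i) ∧ Cᵀ *ᵥ h = 0 ∧ h ⬝ᵥ (B *ᵥ μhat - d) = 0 := by
      rw [hH] at hh; exact hh
    have hs : 0 ≤ ∑ i, h i := Finset.sum_nonneg fun i _ => h1 i
    by_cases hs0 : ∑ i, h i = 0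
    · have : h = 0 := by
        ext i
        exact (Finset.sum_eq_zero_iff_of_nonneg fun i _ => h1 i).1 hs0 i (Finset.mem_univ i)
      rw [this]
      exact Submodule.zero_mem _
    · have hmem : (∑ i, h i)⁻¹ • h ∈ Submodule.span ℝ V₀ := by
        refine hF ⟨⟨fun i => mul_nonneg (inv_nonneg.2 hs) (h1 i), ?_, ?_⟩, ?_⟩
        · rw [mulVec_smul, h2, smul_zero]
        · simp only [Pi.smul_apply, smul_eq_mul, ← Finset.mul_sum]
          exact inv_mul_cancel₀ hs0
        · rw [smul_dotProduct, h3, smul_zero]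
      have := Submodule.smul_mem _ (∑ i, h i) hmem
      rwa [smul_inv_smul₀ hs0] at this
  have hspan : Submodule.span ℝ V₀ = Submodule.span ℝ H :=
    le_antisymm (Submodule.span_mono hsub) (Submodule.span_le.2 hsup)
  have hkey : ∀ S : Set (Fin k → ℝ), Submodule.span ℝ ((fun h => Bᵀ *ᵥ h) '' S) =
      (Submodule.span ℝ S).map Bᵀ.mulVecLin := fun S => by
    rw [Submodule.map_span]
    exact congrArg _ (Set.image_congr fun h _ => (mulVecLin_apply Bᵀ h).symm)
  rw [hkey, hkey, hspan]
end

section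
/- Let A be a d_A×d_m real matrix with rows a_1',…,a_{d_A}', b ∈ ℝ^{d_A}, and suppose C = poly(A,b) is nonempty. For J ⊆ {1,…,d_A}, define C_J = {x ∈ C : a_j'x = b_j for all j ∈ J, and a_j'x < b_j for all j ∉ J}, V_J = {Σ_{j∈J} v_j a_j : v_j ≥ 0} (with V_∅ = {0}), and K_J = C_J + V_J (Minkowski sum). Let P_C denote the Euclidean metric projection onto the closed convex set C. Then: (a) if X ∈ K_J then X − P_C X ∈ V_J and P_C X ∈ C_J; (b) the family {K_J : J ⊆ {1,…,d_A}} is a partition of ℝ^{d_m}; (c) for every J ⊆ {1,…,d_A} and every X ∈ ℝ^{d_m}, X ∈ K_J if and only if J = {j : a_j'(P_C X) = b_j}. -/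
/-!
A point `p ∈ C` is the projection of `X` exactly when the variational inequality
`⟪X - p, y - p⟫ ≤ 0` holds for all `y ∈ C`.

If `X = p + v` with `p ∈ C_J` and `v ∈ V_J`, then `⟪a_j, y - p⟫ ≤ b_j - b_j = 0` for `j ∈ J` and
`y ∈ C`, so `p` satisfies this inequality and `p = P X`; in particular `J` is the set of
constraints active at `P X`. Conversely, let `J` be the set of constraints active at `P X`. Every
`y` with `⟪a_j, y⟫ ≤ 0` for all `j ∈ J` is a feasible direction at `P X`, since the inactive
constraints leave some slack, so `⟪X - P X, y⟫ ≤ 0`. Farkas' lemma then gives `X - P X ∈ V_J`.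
Hence `X ∈ K_J` if and only if `J` is the active set at `P X`, and all three claims follow.

Farkas' lemma for finitely many vectors (`farkas_finset`) is proved algebraically, by induction on
the number of vectors, which avoids showing that finitely generated cones are closed.
-/

open scoped RealInnerProductSpace Pointwise

section

variable {E : Type*} [NormedAddCommGroup E] [InnerProductSpace ℝ E]

/-- Farkas' lemma for a finite family, by Bartl's induction: when `a i` cannot be dropped from the
hypothesis, a vector `y₀` witnessing this, scaled to `⟪a i, y₀⟫ = 1`, is used to replace every
vector `w` by `w - ⟪w, y₀⟫ • a i`. -/
theorem farkas_finset {ι : Type*} [DecidableEq ι] (s : Finset ι) (a : ι → E) (v : E)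
    (h : ∀ y, (∀ j ∈ s, ⟪a j, y⟫ ≤ 0) → ⟪v, y⟫ ≤ 0) :
    ∃ c : ι → ℝ, (∀ j, 0 ≤ c j) ∧ v = ∑ j ∈ s, c j • a j := by
  induction s using Finset.induction_on generalizing a v with
  | empty =>
    refine ⟨0, fun _ => le_rfl, ?_⟩
    have := h v (by simp)
    simpa using real_inner_self_nonpos.1 this
  | insert i s hi ih =>
    by_cases h' : ∀ y, (∀ j ∈ s, ⟪a j, y⟫ ≤ 0) → ⟪v, y⟫ ≤ 0
    · obtain ⟨c, hc, hv⟩ := ih a v h'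
      refine ⟨fun j => if j = i then 0 else c j, fun j => ?_, ?_⟩
      · dsimp only
        split_ifs
        exacts [le_rfl, hc j]
      · rw [Finset.sum_insert hi, hv]
        simp only [if_true, zero_smul, zero_add]
        refine Finset.sum_congr rfl fun j hj => ?_
        rw [if_neg (ne_of_mem_of_not_mem hj hi)]
    · push Not at h'
      obtain ⟨y₁, hy₁, hvy₁⟩ := h'
      have hpos : 0 < ⟪a i, y₁⟫ := by
        by_contra hcon
        refine absurd (h y₁ fun j hj => ?_) (not_le.2 hvy₁)
        rcases Finset.mem_insert.1 hj with rfl | hj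
        exacts [not_lt.1 hcon, hy₁ j hj]
      obtain ⟨y₀, hy₀, hvy₀, hay₀⟩ :
          ∃ y₀ : E, (∀ j ∈ s, ⟪a j, y₀⟫ ≤ 0) ∧ 0 ≤ ⟪v, y₀⟫ ∧ ⟪a i, y₀⟫ = 1 := by
        refine ⟨(⟪a i, y₁⟫)⁻¹ • y₁, fun j hj => ?_, ?_, ?_⟩
        · rw [inner_smul_right]
          exact mul_nonpos_of_nonneg_of_nonpos (inv_nonneg.2 hpos.le) (hy₁ j hj)
        · rw [inner_smul_right]
          positivity
        · rw [inner_smul_right, inv_mul_cancel₀ hpos.ne']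
      -- Pairing with a modified vector is pairing with the projection of `y` along `y₀`
      -- onto the orthogonal complement of `a i`.
      have key : ∀ w y : E,
          ⟪w - ⟪w, y₀⟫ • a i, y⟫ = ⟪w, y - ⟪a i, y⟫ • y₀⟫ := fun w y => by
        rw [inner_sub_left, inner_sub_right, real_inner_smul_left, real_inner_smul_right]
        ring
      obtain ⟨c, hc, hv⟩ := ih (fun j => a j - ⟪a j, y₀⟫ • a i) (v - ⟪v, y₀⟫ • a i) (by
        intro y hy
        rw [key]
        refine h _ fun j hj => ?_
        rcases Finset.mem_insert.1 hj with rfl | hj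
        · rw [inner_sub_right, real_inner_smul_right, hay₀]
          simp
        · rw [← key]
          exact hy j hj)
      refine ⟨fun j => if j = i then ⟪v, y₀⟫ - ∑ j ∈ s, c j * ⟪a j, y₀⟫ else c j,
        fun j => ?_, ?_⟩
      · dsimp only
        split_ifs
        · have : ∑ j ∈ s, c j * ⟪a j, y₀⟫ ≤ 0 := Finset.sum_nonpos fun j hj =>
            mul_nonpos_of_nonneg_of_nonpos (hc j) (hy₀ j hj)
          linarith
        · exact hc j
      · rw [Finset.sum_insert hi]
        simp only [if_true]
        have h1 : ∑ j ∈ s, (if j = i then ⟪v, y₀⟫ - ∑ j ∈ s, c j * ⟪a j, y₀⟫ else c j) • a j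
            = ∑ j ∈ s, c j • a j := Finset.sum_congr rfl fun j hj => by
          rw [if_neg (ne_of_mem_of_not_mem hj hi)]
        rw [h1, sub_smul, Finset.sum_smul]
        simp only [smul_sub, Finset.sum_sub_distrib, smul_smul] at hv
        rw [sub_eq_iff_eq_add] at hv
        nth_rewrite 1 [hv]
        abel

/-- The variational inequality for a nearest point of a convex set. -/
theorem inner_sub_nonpos_of_nearest {C : Set E} (hconv : Convex ℝ C) {x p : E} (hp : p ∈ C)
    (hmin : ∀ y ∈ C, dist x p ≤ dist x y) : ∀ y ∈ C, ⟪x - p, y - p⟫ ≤ 0 := by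
  refine (norm_eq_iInf_iff_real_inner_le_zero hconv hp).1 ?_
  have : Nonempty C := ⟨⟨p, hp⟩⟩
  refine le_antisymm (le_ciInf fun w => ?_)
    (ciInf_le (f := fun w : C => ‖x - w‖) ⟨0, ?_⟩ ⟨p, hp⟩)
  · simpa only [dist_eq_norm] using hmin w w.2
  · rintro _ ⟨w, rfl⟩
    exact norm_nonneg _

/-- A point of `C` satisfying the variational inequality is the only one. -/
theorem eq_of_inner_sub_nonpos {C : Set E} {x p q : E} (hp : p ∈ C) (hq : q ∈ C)
    (h₁ : ∀ y ∈ C, ⟪x - p, y - p⟫ ≤ 0) (h₂ : ∀ y ∈ C, ⟪x - q, y - q⟫ ≤ 0) : p = q := by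
  have e : ⟪x - p, q - p⟫ + ⟪x - q, p - q⟫ = ⟪q - p, q - p⟫ := by
    rw [← neg_sub q p, inner_neg_right, ← sub_eq_add_neg, ← inner_sub_left]
    congr 1
    abel
  have : ⟪q - p, q - p⟫ ≤ 0 := by linarith [h₁ q hq, h₂ p hp]
  exact (sub_eq_zero.1 (real_inner_self_nonpos.1 this)).symm

theorem convex_poly {ι : Type*} (A : ι → E) (b : ι → ℝ) :
    Convex ℝ {x | ∀ j, ⟪A j, x⟫ ≤ b j} := by
  intro x hx y hy s t hs ht hst j
  rw [inner_add_right, real_inner_smul_right, real_inner_smul_right]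
  calc s * ⟪A j, x⟫ + t * ⟪A j, y⟫ ≤ s * b j + t * b j := by
        gcongr
        exacts [hx j, hy j]
    _ = b j := by rw [← add_mul, hst, one_mul]

/-- A direction along which no active constraint increases is feasible: the inactive constraints
tolerate a small step. -/
theorem exists_feasible_step {ι : Type*} [Finite ι] (A : ι → E) (b : ι → ℝ) {p y : E}
    (hp : ∀ j, ⟪A j, p⟫ ≤ b j) (hy : ∀ j, ⟪A j, p⟫ = b j → ⟪A j, y⟫ ≤ 0) :
    ∃ t : ℝ, 0 < t ∧ ∀ j, ⟪A j, p + t • y⟫ ≤ b j := by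
  have hev : ∀ j, ∀ᶠ t : ℝ in nhdsWithin 0 (Set.Ioi 0), ⟪A j, p + t • y⟫ ≤ b j := by
    intro j
    rcases (hp j).eq_or_lt with hj | hj
    · filter_upwards [self_mem_nhdsWithin] with t ht
      rw [inner_add_right, real_inner_smul_right]
      linarith [mul_nonpos_of_nonneg_of_nonpos (le_of_lt ht) (hy j hj)]
    · have hc : ContinuousAt (fun t : ℝ => ⟪A j, p + t • y⟫) 0 := by fun_prop
      have h0 : ∀ᶠ t : ℝ in nhds 0, ⟪A j, p + t • y⟫ < b j :=
        hc.eventually_lt continuousAt_const (by simpa using hj)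
      exact (h0.filter_mono nhdsWithin_le_nhds).mono fun _ => le_of_lt
  obtain ⟨t, h, ht⟩ := ((Filter.eventually_all.2 hev).and self_mem_nhdsWithin).exists
  exact ⟨t, ht, h⟩

end

/-- (Polyhedral partition by active inequalities.) Let `C = poly(A,b)` be
nonempty, and for `J ⊆ {1,…,d_A}` define `C_J`, `V_J` and `K_J = C_J + V_J`. Let `P_C` be
the Euclidean metric projection onto `C`. Then (a) `X ∈ K_J` implies `X - P_C X ∈ V_J` and
`P_C X ∈ C_J`; (b) the `K_J` partition `ℝ^{d_m}`; (c) `X ∈ K_J` iff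
`J = {j : a_jᵀ(P_C X) = b_j}`. -/
theorem statement11 {dA dm : ℕ}
    (A : Fin dA → EuclideanSpace ℝ (Fin dm)) (b : Fin dA → ℝ)
    (C : Set (EuclideanSpace ℝ (Fin dm))) (hC : C = {x | ∀ j, ⟪A j, x⟫ ≤ b j})
    (hne : C.Nonempty)
    (P : EuclideanSpace ℝ (Fin dm) → EuclideanSpace ℝ (Fin dm))
    (hP : ∀ x, P x ∈ C ∧ ∀ y ∈ C, dist x (P x) ≤ dist x y)
    (CJ VJ KJ : Set (Fin dA) → Set (EuclideanSpace ℝ (Fin dm)))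
    (hCJ : ∀ J, CJ J = {x ∈ C | (∀ j ∈ J, ⟪A j, x⟫ = b j) ∧ ∀ j ∉ J, ⟪A j, x⟫ < b j})
    (hVJ : ∀ J, VJ J =
      {v | ∃ c : Fin dA → ℝ, (∀ j, 0 ≤ c j) ∧ (∀ j ∉ J, c j = 0) ∧ v = ∑ j, c j • A j})
    (hKJ : ∀ J, KJ J = CJ J + VJ J) :
    (∀ (J : Set (Fin dA)) (X), X ∈ KJ J → X - P X ∈ VJ J ∧ P X ∈ CJ J) ∧
      ((⋃ J : Set (Fin dA), KJ J) = Set.univ ∧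
        Pairwise fun J J' : Set (Fin dA) => Disjoint (KJ J) (KJ J')) ∧
      (∀ (J : Set (Fin dA)) (X), X ∈ KJ J ↔ J = {j | ⟪A j, P X⟫ = b j}) := by
  classical
  have hPC : ∀ X, P X ∈ C := fun X => (hP X).1
  have hvar : ∀ X, ∀ y ∈ C, ⟪X - P X, y - P X⟫ ≤ 0 := fun X =>
    inner_sub_nonpos_of_nearest (hC ▸ convex_poly A b) (hPC X) (hP X).2
  have ha : ∀ (J : Set (Fin dA)) (X), X ∈ KJ J → X - P X ∈ VJ J ∧ P X ∈ CJ J := by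
    intro J X hX
    rw [hKJ] at hX
    obtain ⟨p, hp, v, hv, rfl⟩ := Set.mem_add.1 hX
    have hp' := hp
    have hv' := hv
    rw [hCJ] at hp'
    rw [hVJ] at hv'
    obtain ⟨hpC, hpJ, -⟩ := hp'
    obtain ⟨c, hc, hc0, hvc⟩ := hv'
    have hpP : P (p + v) = p := by
      refine eq_of_inner_sub_nonpos (hPC _) hpC (hvar _) fun y hy => ?_
      rw [add_sub_cancel_left, hvc, sum_inner]
      refine Finset.sum_nonpos fun j _ => ?_
      rw [real_inner_smul_left]
      by_cases hj : j ∈ J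
      · refine mul_nonpos_of_nonneg_of_nonpos (hc j) ?_
        rw [hC] at hy
        rw [inner_sub_right, hpJ j hj]
        linarith [hy j]
      · rw [hc0 j hj, zero_mul]
    rw [hpP, add_sub_cancel_left]
    exact ⟨hv, hp⟩
  have hactive : ∀ X, X ∈ KJ {j | ⟪A j, P X⟫ = b j} := by
    intro X
    have hle : ∀ j, ⟪A j, P X⟫ ≤ b j := by
      have := hPC X
      rw [hC] at this
      exact this
    have hfarkas : ∀ y, (∀ j ∈ Finset.univ.filter (fun j => ⟪A j, P X⟫ = b j), ⟪A j, y⟫ ≤ 0) →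
        ⟪X - P X, y⟫ ≤ 0 := by
      intro y hy
      obtain ⟨t, ht, hfeas⟩ := exists_feasible_step A b (y := y) hle
        fun j hj => hy j (by simpa using hj)
      have h := hvar X (P X + t • y) (by rw [hC]; exact hfeas)
      rw [add_sub_cancel_left, real_inner_smul_right] at h
      exact nonpos_of_mul_nonpos_right h ht
    obtain ⟨c, hc, hsum⟩ := farkas_finset _ A (X - P X) hfarkas
    rw [hKJ]
    refine Set.mem_add.2 ⟨P X, ?_, X - P X, ?_, add_sub_cancel _ _⟩
    · rw [hCJ]
      exact ⟨hPC X, fun j hj => hj, fun j hj => lt_of_le_of_ne (hle j) hj⟩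
    · rw [hVJ]
      refine ⟨fun j => if ⟪A j, P X⟫ = b j then c j else 0, fun j => ?_, fun j hj => if_neg hj, ?_⟩
      · dsimp only
        split_ifs
        exacts [hc j, le_rfl]
      · rw [hsum, Finset.sum_filter]
        simp only [ite_smul, zero_smul]
  have hcc : ∀ (J : Set (Fin dA)) (X), X ∈ KJ J ↔ J = {j | ⟪A j, P X⟫ = b j} := by
    intro J X
    refine ⟨fun hX => ?_, fun hJ => hJ ▸ hactive X⟩
    have h := (ha J X hX).2
    rw [hCJ] at h
    ext j
    refine ⟨h.2.1 j, fun hj => ?_⟩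
    by_contra hjJ
    exact (h.2.2 j hjJ).ne hj
  refine ⟨ha, ⟨?_, fun J J' hJ => ?_⟩, hcc⟩
  · exact Set.eq_univ_of_forall fun X => Set.mem_iUnion.2 ⟨_, hactive X⟩
  · exact Set.disjoint_left.2 fun X hX hX' =>
      hJ (((hcc J X).1 hX).trans ((hcc J' X).1 hX').symm)
end

section
/- Let A be a d_A×d_m real matrix with rows a_1',…,a_{d_A}', b ∈ ℝ^{d_A}, and suppose C = poly(A,b) is nonempty. Define J₀ = {j : a_j = 0}, J₀₀ = {j : a_j = 0 and b_j = 0}, J_{≠0} = {j : a_j ≠ 0}; C_J, V_J, K_J for J ⊆ {1,…,d_A} as in the polyhedral partition; C₀ = ∪{C_J : rk(A_J) = 0}; 𝒥₁ = {J : rk(A_J) = 1, J∩J₀ = J₀₀, and for all j ∈ J, ℓ ∉ J with a_j ≠ 0 and a_ℓ ≠ 0, either a_j/‖a_j‖ ≠ a_ℓ/‖a_ℓ‖ or b_j/‖a_j‖ ≠ b_ℓ/‖a_ℓ‖}; 𝒥₁^{os} = {J ∈ 𝒥₁ : a_j/‖a_j‖ = a_ℓ/‖a_ℓ‖ whenever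 j,ℓ ∈ J with a_j ≠ 0 ≠ a_ℓ}; 𝒥₁^{ts} = {J ∈ 𝒥₁ : there exist j,ℓ ∈ J with a_j ≠ 0 ≠ a_ℓ, a_j/‖a_j‖ = −a_ℓ/‖a_ℓ‖, and b_j/‖a_j‖ = −b_ℓ/‖a_ℓ‖}; for J ∈ 𝒥₁^{os}, C^Δ_J = {x ∈ C₀ : argmin_{j∈J_{≠0}} (b_j − a_j'x)/‖a_j‖ = J∩J_{≠0}}; and C^| = C₀ \ ∪_{J∈𝒥₁^{os}} C^Δ_J. Then: (a) C₀ = C_{J₀₀}; (b) C^| together with the sets C^Δ_J for J ∈ 𝒥₁^{os} forms a partition of C₀; (c) if A ≠ 0 then C^| has Lebesgue measure zero in ℝ^{d_m}; (d) ∪{K_J : rk(A_J) = 1} = ∪{K_J : J ∈ 𝒥₁^{os} ∪ 𝒥₁^{ts}}. -/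
/-!
A face `C_J` containing a point `x` determines `J` as the set of all constraints active at `x`,
so `J` contains exactly the vacuously active constraints of `J₀₀` among the zero rows, and contains
every constraint describing the same half-space as one of its members. This gives (a) (rank zero
leaves only zero rows) and, for rank one, `J ∈ 𝒥₁`; two nonzero rows in a line have equal or
opposite directions (`unit_eq_or_neg`), which is the one-sided/two-sided alternative in (d).

For (b), the argmin set together with `J₀₀` recovers `J`. For (c), if all rows attaining the argmin
at `x ∈ C₀` had the same direction, that argmin set together with `J₀₀` would be a one-sided index
set whose cell contains `x`. So a point of `C^|` has equal distance to two constraint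
hyperplanes with distinct unit normals; it lies on one of finitely many proper affine hyperplanes,
each of which is null (`volume_hyperplane`).
-/

open MeasureTheory
open scoped RealInnerProductSpace Pointwise

section Aux

variable {n m : ℕ}

theorem volume_hyperplane (w : EuclideanSpace ℝ (Fin m)) (hw : w ≠ 0) (c : ℝ) :
    volume {x : EuclideanSpace ℝ (Fin m) | ⟪w, x⟫ = c} = 0 := by
  let s : AffineSubspace ℝ (EuclideanSpace ℝ (Fin m)) :=
    { carrier := {x | ⟪w, x⟫ = c}
      smul_vsub_vadd_mem' := by
        intro t p q r hp hq hr
        simp only [Set.mem_ofPred_eq, vsub_eq_sub, vadd_eq_add, inner_add_right, inner_smul_right,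
          inner_sub_right] at *
        rw [hp, hq, hr]; ring }
  refine Measure.addHaar_affineSubspace volume s ?_
  intro h
  have hmem : ∀ x, ⟪w, x⟫ = c := fun x => by
    have : x ∈ s := h ▸ AffineSubspace.mem_top ℝ _ x
    exact this
  have h0 := hmem 0
  rw [inner_zero_right] at h0
  have h1 := hmem w
  rw [← h0] at h1
  exact hw (inner_self_eq_zero.mp h1)

theorem finrank_rows_eq_zero_iff (A : Fin n → EuclideanSpace ℝ (Fin m)) (J : Set (Fin n)) :
    Module.finrank ℝ (Submodule.span ℝ (A '' J)) = 0 ↔ ∀ j ∈ J, A j = 0 := by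
  rw [Submodule.finrank_eq_zero, Submodule.span_eq_bot]
  simp

/-- In a one-dimensional span, nonzero rows have equal or opposite unit directions. -/
theorem unit_eq_or_neg (A : Fin n → EuclideanSpace ℝ (Fin m)) (J : Set (Fin n))
    (h : Module.finrank ℝ (Submodule.span ℝ (A '' J)) = 1) {j l : Fin n} (hj : j ∈ J) (hl : l ∈ J)
    (hj0 : A j ≠ 0) (hl0 : A l ≠ 0) :
    ‖A j‖⁻¹ • A j = ‖A l‖⁻¹ • A l ∨ ‖A j‖⁻¹ • A j = -(‖A l‖⁻¹ • A l) := by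
  obtain ⟨v, -, hv⟩ := finrank_eq_one_iff'.mp h
  have key : ∀ i ∈ J, ∃ c : ℝ, ‖A i‖⁻¹ • A i = c • (v : EuclideanSpace ℝ (Fin m)) := by
    intro i hi
    obtain ⟨c, hc⟩ := hv ⟨A i, Submodule.subset_span ⟨i, hi, rfl⟩⟩
    refine ⟨‖A i‖⁻¹ * c, ?_⟩
    have := congrArg Subtype.val hc
    simp only [Submodule.coe_smul] at this
    rw [mul_smul, this]
  obtain ⟨α, hα⟩ := key j hj
  obtain ⟨β, hβ⟩ := key l hl
  have n1 : ‖‖A j‖⁻¹ • A j‖ = 1 := norm_smul_inv_norm (𝕜 := ℝ) hj0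
  have n2 : ‖‖A l‖⁻¹ • A l‖ = 1 := norm_smul_inv_norm (𝕜 := ℝ) hl0
  rw [hα, norm_smul, Real.norm_eq_abs] at n1
  rw [hβ, norm_smul, Real.norm_eq_abs] at n2
  have hv0 : ‖(v : EuclideanSpace ℝ (Fin m))‖ ≠ 0 := by
    intro h0; rw [h0] at n1; simp at n1
  have hab : |α| = |β| := mul_right_cancel₀ hv0 (n1.trans n2.symm)
  rw [hα, hβ]
  rcases abs_eq_abs.mp hab with h | h
  · left; rw [h]
  · right; rw [h, neg_smul]

theorem finrank_rows_eq_one (A : Fin n → EuclideanSpace ℝ (Fin m)) (J : Set (Fin n)) {j : Fin n}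
    (hj : j ∈ J) (hj0 : A j ≠ 0)
    (h : ∀ l ∈ J, A l ≠ 0 → ‖A l‖⁻¹ • A l = ‖A j‖⁻¹ • A j) :
    Module.finrank ℝ (Submodule.span ℝ (A '' J)) = 1 := by
  have : Submodule.span ℝ (A '' J) = Submodule.span ℝ {A j} := by
    apply le_antisymm
    · rw [Submodule.span_le]
      rintro _ ⟨l, hl, rfl⟩
      rw [SetLike.mem_coe, Submodule.mem_span_singleton]
      by_cases hl0 : A l = 0
      · exact ⟨0, by simp [hl0]⟩
      · refine ⟨‖A l‖ * ‖A j‖⁻¹, ?_⟩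
        rw [mul_smul, ← h l hl hl0, smul_inv_smul₀ (norm_ne_zero_iff.mpr hl0)]
    · apply Submodule.span_mono
      rintro _ rfl
      exact ⟨j, hj, rfl⟩
  rw [this, finrank_span_singleton hj0]

/-- For `a ≠ 0`, the signed distance from `x` to the hyperplane `⟪a, ·⟫ = β` in terms of the unit
normal; it depends on `(a, β)` only through the normalized pair. -/
theorem slack_eq (a x : EuclideanSpace ℝ (Fin m)) (β : ℝ) :
    (β - ⟪a, x⟫) / ‖a‖ = β / ‖a‖ - ⟪‖a‖⁻¹ • a, x⟫ := by
  rw [real_inner_smul_left]; ring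

/-- At a point whose active constraints are exactly `J`, the zero rows in `J` are those with zero
right-hand side. -/
theorem zero_active (A : Fin n → EuclideanSpace ℝ (Fin m)) (b : Fin n → ℝ) (J : Set (Fin n))
    (x : EuclideanSpace ℝ (Fin m)) (h1 : ∀ j ∈ J, ⟪A j, x⟫ = b j)
    (h2 : ∀ j ∉ J, ⟪A j, x⟫ < b j) : J ∩ {j | A j = 0} = {j | A j = 0 ∧ b j = 0} := by
  ext j
  simp only [Set.mem_inter_iff, Set.mem_ofPred_eq]
  constructor
  · rintro ⟨hj, h0⟩
    refine ⟨h0, ?_⟩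
    rw [← h1 j hj, h0, inner_zero_left]
  · rintro ⟨h0, hb⟩
    refine ⟨?_, h0⟩
    by_contra hj
    have := h2 j hj
    rw [h0, hb, inner_zero_left] at this
    exact lt_irrefl _ this

end Aux

/-- (Structure of the low-rank faces.) With `C = poly(A,b)` nonempty,
`C_J, V_J, K_J` the polyhedral partition data, `J₀, J₀₀, J_{≠0}`, `C₀`, `𝒥₁`, `𝒥₁^{os}`,
`𝒥₁^{ts}`, `C^Δ_J` and `C^|` as defined: (a) `C₀ = C_{J₀₀}`; (b) `C^|` together with the
`C^Δ_J`, `J ∈ 𝒥₁^{os}`, partitions `C₀`; (c) if `A ≠ 0` then `C^|` has Lebesgue measure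
zero; (d) the union of the `K_J` with `rk(A_J) = 1` equals the union of the `K_J` over
`J ∈ 𝒥₁^{os} ∪ 𝒥₁^{ts}`. -/
theorem statement12 {dA dm : ℕ}
    (A : Fin dA → EuclideanSpace ℝ (Fin dm)) (b : Fin dA → ℝ)
    (C : Set (EuclideanSpace ℝ (Fin dm))) (hC : C = {x | ∀ j, ⟪A j, x⟫ ≤ b j})
    (hne : C.Nonempty)
    (CJ VJ KJ : Set (Fin dA) → Set (EuclideanSpace ℝ (Fin dm)))
    (hCJ : ∀ J, CJ J = {x ∈ C | (∀ j ∈ J, ⟪A j, x⟫ = b j) ∧ ∀ j ∉ J, ⟪A j, x⟫ < b j})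
    (hVJ : ∀ J, VJ J =
      {v | ∃ c : Fin dA → ℝ, (∀ j, 0 ≤ c j) ∧ (∀ j ∉ J, c j = 0) ∧ v = ∑ j, c j • A j})
    (hKJ : ∀ J, KJ J = CJ J + VJ J)
    (rk : Set (Fin dA) → ℕ)
    (hrk : ∀ J, rk J = Module.finrank ℝ (Submodule.span ℝ (A '' J)))
    (J0 J00 Jne : Set (Fin dA))
    (hJ0 : J0 = {j | A j = 0}) (hJ00 : J00 = {j | A j = 0 ∧ b j = 0})
    (hJne : Jne = {j | A j ≠ 0})
    (C0 : Set (EuclideanSpace ℝ (Fin dm)))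
    (hC0 : C0 = ⋃ J ∈ {J : Set (Fin dA) | rk J = 0}, CJ J)
    (Jcal1 Jos Jts : Set (Set (Fin dA)))
    (hJcal1 : Jcal1 = {J | rk J = 1 ∧ J ∩ J0 = J00 ∧
      ∀ j ∈ J, ∀ l ∉ J, A j ≠ 0 → A l ≠ 0 →
        (‖A j‖⁻¹ • A j ≠ ‖A l‖⁻¹ • A l ∨ b j / ‖A j‖ ≠ b l / ‖A l‖)})
    (hJos : Jos = {J ∈ Jcal1 |
      ∀ j ∈ J, ∀ l ∈ J, A j ≠ 0 → A l ≠ 0 → ‖A j‖⁻¹ • A j = ‖A l‖⁻¹ • A l})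
    (hJts : Jts = {J ∈ Jcal1 | ∃ j ∈ J, ∃ l ∈ J, A j ≠ 0 ∧ A l ≠ 0 ∧
      ‖A j‖⁻¹ • A j = -(‖A l‖⁻¹ • A l) ∧ b j / ‖A j‖ = -(b l / ‖A l‖)})
    (CΔ : Set (Fin dA) → Set (EuclideanSpace ℝ (Fin dm)))
    (hCΔ : ∀ J, CΔ J = {x ∈ C0 |
      {j ∈ Jne | ∀ l ∈ Jne, (b j - ⟪A j, x⟫) / ‖A j‖ ≤ (b l - ⟪A l, x⟫) / ‖A l‖}
        = J ∩ Jne})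
    (Cvert : Set (EuclideanSpace ℝ (Fin dm)))
    (hCvert : Cvert = C0 \ ⋃ J ∈ Jos, CΔ J) :
    C0 = CJ J00 ∧
      ((Cvert ∪ ⋃ J ∈ Jos, CΔ J) = C0 ∧
        (∀ J ∈ Jos, Disjoint Cvert (CΔ J)) ∧
        ∀ J₁ ∈ Jos, ∀ J₂ ∈ Jos, J₁ ≠ J₂ → Disjoint (CΔ J₁) (CΔ J₂)) ∧
      (A ≠ 0 → volume Cvert = 0) ∧
      (⋃ J ∈ {J : Set (Fin dA) | rk J = 1}, KJ J) = ⋃ J ∈ Jos ∪ Jts, KJ J := by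
  have memC0 : C0 = CJ J00 := by
    rw [hC0]
    ext x
    simp only [Set.mem_iUnion, Set.mem_ofPred_eq, exists_prop]
    constructor
    · rintro ⟨J, hJ, hx⟩
      have hx' := hx
      rw [hCJ] at hx'
      have hz := zero_active A b J x hx'.2.1 hx'.2.2
      rw [hrk, finrank_rows_eq_zero_iff] at hJ
      have : J = J00 := by
        rw [hJ00, ← hz]
        exact (Set.inter_eq_left.mpr hJ).symm
      exact this ▸ hx
    · intro hx
      refine ⟨J00, ?_, hx⟩
      rw [hrk, finrank_rows_eq_zero_iff, hJ00]
      exact fun j hj => hj.1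
  have hsub : (⋃ J ∈ Jos, CΔ J) ⊆ C0 := by
    refine Set.iUnion₂_subset fun J _ x hx => ?_
    rw [hCΔ] at hx
    exact hx.1
  refine ⟨memC0, ⟨?_, ?_, ?_⟩, ?_, ?_⟩
  · rw [hCvert]; exact Set.sdiff_union_of_subset hsub
  · intro J hJ
    rw [hCvert]
    exact Set.disjoint_sdiff_left.mono_right (Set.subset_biUnion_of_mem (u := CΔ) hJ)
  · intro J₁ h₁ J₂ h₂ hne'
    rw [Set.disjoint_left]
    intro x hx₁ hx₂
    rw [hCΔ] at hx₁ hx₂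
    apply hne'
    have hn : J₁ ∩ Jne = J₂ ∩ Jne := hx₁.2.symm.trans hx₂.2
    rw [hJos, hJcal1] at h₁ h₂
    have hz : J₁ ∩ J0 = J₂ ∩ J0 := h₁.1.2.1.trans h₂.1.2.1.symm
    have hun : J0 ∪ Jne = Set.univ := by
      rw [hJ0, hJne]; ext j; simp [em]
    rw [← Set.inter_univ J₁, ← Set.inter_univ J₂, ← hun, Set.inter_union_distrib_left,
      Set.inter_union_distrib_left, hn, hz]
  · intro hA
    obtain ⟨i, hi⟩ : ∃ i, A i ≠ 0 := Function.ne_iff.mp hA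
    let H : Fin dA × Fin dA → Set (EuclideanSpace ℝ (Fin dm)) := fun p =>
      {x | ⟪‖A p.1‖⁻¹ • A p.1 - ‖A p.2‖⁻¹ • A p.2, x⟫ = b p.1 / ‖A p.1‖ - b p.2 / ‖A p.2‖}
    let S : Set (Fin dA × Fin dA) := {p | ‖A p.1‖⁻¹ • A p.1 ≠ ‖A p.2‖⁻¹ • A p.2}
    have hcov : Cvert ⊆ ⋃ p ∈ S, H p := by
      intro x hx
      rw [hCvert] at hx
      by_contra hcon
      apply hx.2
      let f : Fin dA → ℝ := fun j => (b j - ⟪A j, x⟫) / ‖A j‖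
      let M : Set (Fin dA) := {j ∈ Jne | ∀ l ∈ Jne, f j ≤ f l}
      have hMmem : ∀ j ∈ M, A j ≠ 0 := fun j hj => by
        have := hj.1; rw [hJne] at this; exact this
      obtain ⟨k, hkne, hk⟩ : ∃ k ∈ Jne, ∀ l ∈ Jne, f k ≤ f l :=
        Set.exists_min_image Jne f (Set.toFinite _) ⟨i, by rw [hJne]; exact hi⟩
      have hkM : k ∈ M := ⟨hkne, hk⟩
      have hsame : ∀ j ∈ M, ∀ l ∈ M, ‖A j‖⁻¹ • A j = ‖A l‖⁻¹ • A l := by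
        intro j hj l hl
        by_contra hd
        apply hcon
        refine Set.mem_biUnion (x := (j, l)) hd ?_
        have he : f j = f l := le_antisymm (hj.2 l hl.1) (hl.2 j hj.1)
        simp only [f, slack_eq] at he
        change ⟪‖A j‖⁻¹ • A j - ‖A l‖⁻¹ • A l, x⟫ = b j / ‖A j‖ - b l / ‖A l‖
        rw [inner_sub_left]
        linarith
      -- Adjoining the zero rows of `J₀₀` to the argmin set gives the index set of the cell of `x`.
      have hup : ∀ j ∈ M ∪ J00, A j ≠ 0 → j ∈ M := by
        rintro j (hj | hj) h0
        · exact hj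
        · rw [hJ00] at hj; exact absurd hj.1 h0
      have hos : M ∪ J00 ∈ Jos := by
        rw [hJos, hJcal1]
        refine ⟨⟨?_, ?_, ?_⟩, ?_⟩
        · rw [hrk]
          exact finrank_rows_eq_one A _ (Or.inl hkM) (hMmem k hkM)
            fun l hl h0 => hsame l (hup l hl h0) k hkM
        · rw [hJ0]
          ext j
          constructor
          · rintro ⟨hj | hj, h0⟩
            · exact absurd h0 (hMmem j hj)
            · exact hj
          · intro hj
            refine ⟨Or.inr hj, ?_⟩
            rw [hJ00] at hj; exact hj.1
        · intro j hj l hl hj0 hl0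
          by_contra hcon2
          push Not at hcon2
          have hjM := hup j hj hj0
          have he : f l = f j := by
            simp only [f, slack_eq]
            rw [hcon2.1, hcon2.2]
          refine hl (Or.inl ⟨by rw [hJne]; exact hl0, fun q hq => ?_⟩)
          rw [he]; exact hjM.2 q hq
        · intro j hj l hl hj0 hl0
          exact hsame j (hup j hj hj0) l (hup l hl hl0)
      refine Set.mem_biUnion hos ?_
      rw [hCΔ]
      refine ⟨hx.1, ?_⟩
      change M = (M ∪ J00) ∩ Jne
      ext j
      constructor
      · intro hj; exact ⟨Or.inl hj, hj.1⟩
      · rintro ⟨hj, hj0⟩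
        rw [hJne] at hj0
        exact hup j hj hj0
    refine measure_mono_null hcov ?_
    rw [measure_biUnion_null_iff (Set.to_countable S)]
    intro p hp
    exact volume_hyperplane _ (sub_ne_zero.mpr hp) _
  · apply subset_antisymm
    · refine Set.iUnion₂_subset fun J hJ y hy => ?_
      refine Set.mem_biUnion (x := J) ?_ hy
      rw [hKJ] at hy
      obtain ⟨x, hx, -⟩ := Set.mem_add.mp hy
      rw [hCJ] at hx
      obtain ⟨-, hx1, hx2⟩ := hx
      have hnorm : ∀ j, ⟪A j, x⟫ = b j → ⟪‖A j‖⁻¹ • A j, x⟫ = b j / ‖A j‖ := fun j hj => by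
        rw [real_inner_smul_left, hj]; ring
      have hcal : J ∈ Jcal1 := by
        rw [hJcal1]
        refine ⟨hJ, ?_, ?_⟩
        · rw [hJ0, hJ00]; exact zero_active A b J x hx1 hx2
        · intro j hj l hl hj0 hl0
          by_contra hcon
          push Not at hcon
          have h1 := hnorm j (hx1 j hj)
          rw [hcon.1, hcon.2, real_inner_smul_left, div_eq_inv_mul] at h1
          have h2 := mul_left_cancel₀ (inv_ne_zero (norm_ne_zero_iff.mpr hl0)) h1
          exact (hx2 l hl).ne h2
      by_cases hall : ∀ j ∈ J, ∀ l ∈ J, A j ≠ 0 → A l ≠ 0 → ‖A j‖⁻¹ • A j = ‖A l‖⁻¹ • A l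
      · left; rw [hJos]; exact ⟨hcal, hall⟩
      · right
        push Not at hall
        obtain ⟨j, hj, l, hl, hj0, hl0, hd⟩ := hall
        have hJ1 : Module.finrank ℝ (Submodule.span ℝ (A '' J)) = 1 := by rw [← hrk]; exact hJ
        have hneg := (unit_eq_or_neg A J hJ1 hj hl hj0 hl0).resolve_left hd
        rw [hJts]
        refine ⟨hcal, j, hj, l, hl, hj0, hl0, hneg, ?_⟩
        rw [← hnorm j (hx1 j hj), ← hnorm l (hx1 l hl), hneg, inner_neg_left]
    · refine Set.biUnion_subset_biUnion_left fun J hJ => ?_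
      have hcal : J ∈ Jcal1 := by
        rcases hJ with h | h
        · rw [hJos] at h; exact h.1
        · rw [hJts] at h; exact h.1
      rw [hJcal1] at hcal
      exact hcal.1
end

section
/- Let r ≥ 1 be an integer and let V ⊆ ℝ^r be a Borel-measurable cone (i.e., λv ∈ V for every v ∈ V and λ ≥ 0). Let V* = {γ ∈ ℝ^r : ⟨y,γ⟩ ≤ 0 for all y ∈ V} be its polar cone, let γ ∈ V*, let α ∈ (0,1), and let Y = γ + Z where Z is a standard Gaussian vector in ℝ^r. Then P(Y ∈ V and ‖Y‖² > χ²_{r,1−α}) ≤ α·P(Y ∈ V), with equality if γ = 0. -/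
/-!
Under the standard Gaussian measure `G` the norm and the direction of a vector are independent:
the density depends on the norm only, and polar coordinates split Lebesgue measure into a product
(`lintegral_mul_radial`). Hence a function `g` that is constant along rays satisfies
`∫_{‖x‖² > q} g dG = G(‖x‖² > q) ∫ g dG` (`lintegral_gaussian_of_homogeneous`). At the critical
value `q` the factor is exactly `α` (`stdGaussian_chiSqCrit`), and `g = 1_V` is the case `γ = 0`.

For general `γ` in the polar cone, the law of `γ + Z` has density
`h(x) = exp (⟨x, γ⟩ - ‖γ‖² / 2)` with respect to `G` (`map_add_stdGaussian`), and `h` decreases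
along each ray of `V`. Let `w` be the function constant along rays that equals `h` on the sphere
`‖x‖² = q`. On `V` one has `h ≤ w` outside that sphere and `w ≤ h` inside, so
`(1 - α) ∫_{V, >q} h ≤ (1 - α) ∫_{V, >q} w = α ∫_{V, ≤q} w ≤ α ∫_{V, ≤q} h`;
adding `α ∫_{V, >q} h` to both sides gives the inequality.
-/


open MeasureTheory ProbabilityTheory Filter
open scoped ENNReal

noncomputable section

/-- The standard Gaussian measure on `ℝ^r` (the `r`-fold product of `N(0,1)`). -/
def stdGaussian (r : ℕ) : Measure (Fin r → ℝ) :=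
  Measure.pi fun _ => gaussianReal 0 1

/-- `χ²_{r,1-α}`: the `1-α` quantile of the chi-squared distribution with `r` degrees of
freedom, i.e. the unique `q > 0` with `P(‖Z_r‖² > q) = α`; by convention `0` when `r = 0`. -/
def chiSqCrit (r : ℕ) (α : ℝ) : ℝ :=
  if r = 0 then 0
  else sInf {q : ℝ | 0 < q ∧ stdGaussian r {z | q < ∑ i, z i ^ 2} = ENNReal.ofReal α}

end

noncomputable section

lemma pi_gaussianReal_eq_withDensity {ι : Type*} [Fintype ι] (m : ι → ℝ) :
    Measure.pi (fun i => gaussianReal (m i) 1) =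
      (volume : Measure (ι → ℝ)).withDensity
        (fun x => ENNReal.ofReal (∏ i, gaussianPDFReal (m i) 1 (x i))) := by
  refine Measure.pi_eq fun s hs => ?_
  rw [withDensity_apply _ (MeasurableSet.univ_pi hs), volume_pi, Measure.restrict_pi_pi,
    ← ofReal_integral_eq_lintegral_ofReal, integral_fintype_prod_eq_prod,
    ENNReal.ofReal_prod_of_nonneg]
  · refine Finset.prod_congr rfl fun i _ => ?_
    rw [gaussianReal_apply_eq_integral _ one_ne_zero]
  · exact fun i _ => integral_nonneg fun x => gaussianPDFReal_nonneg _ _ _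
  · exact Integrable.fintype_prod fun i => (integrable_gaussianPDFReal _ _).integrableOn
  · exact ae_of_all _ fun x => Finset.prod_nonneg fun i _ => gaussianPDFReal_nonneg _ _ _

/-- The density of the standard Gaussian vector, as a function of the squared norm. -/
def radialDensity (r : ℕ) (s : ℝ) : ℝ≥0∞ :=
  ENNReal.ofReal ((√(2 * Real.pi * (1 : NNReal)))⁻¹ ^ r * Real.exp (-s / 2))

lemma measurable_radialDensity (r : ℕ) : Measurable (radialDensity r) := by
  unfold radialDensity; fun_prop

lemma measurable_sumSq (r : ℕ) : Measurable fun x : Fin r → ℝ => ∑ i, x i ^ 2 := by fun_prop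

lemma stdGaussian_eq_withDensity (r : ℕ) :
    _root_.stdGaussian r = (volume : Measure (Fin r → ℝ)).withDensity
      (fun x => radialDensity r (∑ i, x i ^ 2)) := by
  rw [_root_.stdGaussian, pi_gaussianReal_eq_withDensity]
  congr 1
  funext x
  simp only [radialDensity, gaussianPDFReal, Finset.prod_mul_distrib, ← Real.exp_sum]
  simp [Finset.sum_div, ← Finset.sum_neg_distrib, neg_div]

/-- Cameron–Martin: the law of `γ + Z` has density `exp (⟨x, γ⟩ - ‖γ‖² / 2)` with respect to the
law of `Z`. -/
lemma map_add_stdGaussian {r : ℕ} (γ : Fin r → ℝ) :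
    (_root_.stdGaussian r).map (fun z => γ + z) = (_root_.stdGaussian r).withDensity
      (fun x => ENNReal.ofReal (Real.exp (∑ i, x i * γ i - (∑ i, γ i ^ 2) / 2))) := by
  have h1 : (_root_.stdGaussian r).map (fun z => γ + z) =
      Measure.pi (fun i => gaussianReal (γ i) 1) := by
    rw [_root_.stdGaussian]
    have := Measure.pi_map_pi (μ := fun _ : Fin r => gaussianReal 0 1)
      (f := fun i x => γ i + x) (fun i => by fun_prop)
    simp only [gaussianReal_map_const_add, zero_add] at this
    exact this
  rw [h1, pi_gaussianReal_eq_withDensity, stdGaussian_eq_withDensity, ← withDensity_mul]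
  rotate_left
  · exact (measurable_radialDensity r).comp (measurable_sumSq r)
  · fun_prop
  congr 1
  funext x
  simp only [radialDensity, gaussianPDFReal, Finset.prod_mul_distrib, ← Real.exp_sum, Pi.mul_apply]
  rw [← ENNReal.ofReal_mul (by positivity), mul_assoc ((√_)⁻¹ ^ r), ← Real.exp_add]
  congr 2
  · simp
  · congr 1
    simp only [Finset.sum_div, ← Finset.sum_neg_distrib, neg_div, ← Finset.sum_add_distrib,
      ← Finset.sum_sub_distrib]
    refine Finset.sum_congr rfl fun i _ => ?_
    push_cast
    ring

/-- Polar coordinates separate a function of the direction from a function of the norm. -/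
lemma lintegral_mul_radial {r : ℕ} [NeZero r] (g : (Fin r → ℝ) → ℝ≥0∞) (hg : Measurable g)
    (hom : ∀ t : ℝ, 0 < t → ∀ x, g (t • x) = g x) (k : ℝ → ℝ≥0∞) (hk : Measurable k) :
    ∫⁻ x, g x * k (∑ i, x i ^ 2) =
      (∫⁻ u, g (WithLp.ofLp u.1) ∂(volume : Measure (EuclideanSpace ℝ (Fin r))).toSphere) *
        ∫⁻ t, k (t.1 ^ 2) ∂(Measure.volumeIoiPow (r - 1)) := by
  let E := EuclideanSpace ℝ (Fin r)
  have hm : Measurable fun x : Fin r → ℝ => g x * k (∑ i, x i ^ 2) :=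
    hg.mul (hk.comp (measurable_sumSq r))
  have hof : Measurable (WithLp.ofLp : E → (Fin r → ℝ)) :=
    (PiLp.volume_preserving_ofLp (Fin r)).measurable
  rw [← (PiLp.volume_preserving_ofLp (Fin r)).lintegral_comp hm]
  have hnorm : ∀ y : E, ∑ i, (WithLp.ofLp y) i ^ 2 = ‖y‖ ^ 2 := fun y => by
    rw [EuclideanSpace.real_norm_sq_eq]
  simp only [hnorm]
  have hk2 : Measurable fun t : Set.Ioi (0 : ℝ) => k (t.1 ^ 2) :=
    hk.comp (by fun_prop)
  have hgs : Measurable fun u : Metric.sphere (0 : E) 1 => g (WithLp.ofLp u.1) :=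
    hg.comp (hof.comp measurable_subtype_coe)
  rw [← lintegral_prod_mul hgs.aemeasurable hk2.aemeasurable]
  have hmp := (volume : Measure E).measurePreserving_homeomorphUnitSphereProd
  rw [finrank_euclideanSpace_fin] at hmp
  have hpm : Measurable fun z : Metric.sphere (0 : E) 1 × Set.Ioi (0 : ℝ) =>
      g (WithLp.ofLp z.1.1) * k (z.2.1 ^ 2) :=
    (hgs.comp measurable_fst).mul (hk2.comp measurable_snd)
  rw [← hmp.lintegral_comp hpm]
  change ∫⁻ y : E, _ = _
  conv_lhs => rw [← restrict_compl_singleton (μ := (volume : Measure E)) 0,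
    ← lintegral_subtype_comap (measurableSet_singleton _).compl]
  refine lintegral_congr fun y => ?_
  have hy : 0 < ‖y.1‖ := norm_pos_iff.2 y.2
  simp only [homeomorphUnitSphereProd_apply_fst_coe, homeomorphUnitSphereProd_apply_snd_coe]
  rw [show WithLp.ofLp (‖y.1‖⁻¹ • y.1) = ‖y.1‖⁻¹ • WithLp.ofLp y.1 from rfl, hom _ (inv_pos.2 hy)]

/-- Under the standard Gaussian law the norm is independent of the direction. -/
lemma lintegral_gaussian_of_homogeneous {r : ℕ} [NeZero r] (g : (Fin r → ℝ) → ℝ≥0∞)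
    (hg : Measurable g) (hom : ∀ t : ℝ, 0 < t → ∀ x, g (t • x) = g x) {s : Set ℝ}
    (hs : MeasurableSet s) :
    ∫⁻ x in {x | ∑ i, x i ^ 2 ∈ s}, g x ∂(_root_.stdGaussian r) =
      _root_.stdGaussian r {x | ∑ i, x i ^ 2 ∈ s} * ∫⁻ x, g x ∂(_root_.stdGaussian r) := by
  have : IsProbabilityMeasure (_root_.stdGaussian r) := by
    unfold _root_.stdGaussian; infer_instance
  let σ := (volume : Measure (EuclideanSpace ℝ (Fin r))).toSphere
  let K : Set ℝ → ℝ≥0∞ := fun s =>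
    ∫⁻ t, s.indicator (radialDensity r) (t.1 ^ 2) ∂(Measure.volumeIoiPow (r - 1))
  have key : ∀ g : (Fin r → ℝ) → ℝ≥0∞, Measurable g →
      (∀ t : ℝ, 0 < t → ∀ x, g (t • x) = g x) → ∀ s : Set ℝ, MeasurableSet s →
      ∫⁻ x in {x | ∑ i, x i ^ 2 ∈ s}, g x ∂(_root_.stdGaussian r) =
        (∫⁻ u, g (WithLp.ofLp u.1) ∂σ) * K s := by
    intro g hg hom s hs
    have hs' : MeasurableSet {x : Fin r → ℝ | ∑ i, x i ^ 2 ∈ s} := measurable_sumSq r hs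
    have hd : Measurable fun x : Fin r → ℝ => radialDensity r (∑ i, x i ^ 2) :=
      (measurable_radialDensity r).comp (measurable_sumSq r)
    rw [← lintegral_mul_radial g hg hom _ ((measurable_radialDensity r).indicator hs),
      ← lintegral_indicator hs', stdGaussian_eq_withDensity,
      lintegral_withDensity_eq_lintegral_mul _
        hd (hg.indicator hs')]
    refine lintegral_congr fun x => ?_
    by_cases hx : ∑ i, x i ^ 2 ∈ s <;> simp [Set.indicator, hx, mul_comm]
  have h1 := key g hg hom s hs
  have h2 := key g hg hom Set.univ .univ
  have h3 := key (fun _ => 1) measurable_const (fun _ _ _ => rfl) s hs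
  have h4 := key (fun _ => 1) measurable_const (fun _ _ _ => rfl) Set.univ .univ
  simp only [Set.mem_univ, Set.ofPred_true, Measure.restrict_univ, lintegral_const, one_mul,
    measure_univ, Measure.restrict_apply_univ] at h2 h3 h4
  rw [h1, h2, h3]
  calc _ = (∫⁻ u, g (WithLp.ofLp u.1) ∂σ) * K s * (σ Set.univ * K Set.univ) := by
        rw [← h4, mul_one]
    _ = _ := by ring

lemma stdGaussian_sumSq_eq {r : ℕ} [NeZero r] (c : ℝ) :
    _root_.stdGaussian r {x | ∑ i, x i ^ 2 = c} = 0 := by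
  rw [stdGaussian_eq_withDensity]
  refine withDensity_absolutelyContinuous _ _ ?_
  have hm : MeasurableSet {x : Fin r → ℝ | ∑ i, x i ^ 2 = c} :=
    measurable_sumSq r (measurableSet_singleton c)
  rw [← (PiLp.volume_preserving_ofLp (Fin r)).measure_preimage hm.nullMeasurableSet]
  refine measure_mono_null (t := Metric.sphere (0 : EuclideanSpace ℝ (Fin r)) (√c)) ?_
    (Measure.addHaar_sphere _ _ _)
  intro y hy
  have hy' : ‖y‖ ^ 2 = c := by rw [EuclideanSpace.real_norm_sq_eq]; exact hy
  rw [mem_sphere_zero_iff_norm, ← hy', Real.sqrt_sq (norm_nonneg _)]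

/-- The infimum defining `chiSqCrit` is attained, because the chi-squared distribution function
is continuous. -/
lemma stdGaussian_chiSqCrit {r : ℕ} [NeZero r] {α : ℝ} (hα : 0 < α) (hα1 : α < 1) :
    _root_.stdGaussian r {x | chiSqCrit r α < ∑ i, x i ^ 2} = ENNReal.ofReal α := by
  have hpr : IsProbabilityMeasure (_root_.stdGaussian r) := by
    unfold _root_.stdGaussian; infer_instance
  set μ := (_root_.stdGaussian r).map (fun x => ∑ i, x i ^ 2) with hμ
  have hμp : IsProbabilityMeasure μ :=
    Measure.isProbabilityMeasure_map (measurable_sumSq r).aemeasurable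
  have hatom : ∀ c, μ {c} = 0 := fun c => by
    rw [hμ, Measure.map_apply (measurable_sumSq r) (measurableSet_singleton c)]
    exact stdGaussian_sumSq_eq c
  have hcont : Continuous (cdf μ) := by
    rw [continuous_iff_continuousAt]
    intro c
    rw [(cdf μ).mono.continuousAt_iff_leftLim_eq_rightLim, StieltjesFunction.rightLim_eq]
    have h := (cdf μ).measure_singleton c
    rw [measure_cdf, hatom] at h
    have h' := ENNReal.ofReal_eq_zero.1 h.symm
    exact le_antisymm ((cdf μ).mono.leftLim_le le_rfl) (by linarith)
  have h0 : ∀ q ≤ 0, cdf μ q = 0 := by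
    intro q hq
    rw [cdf_eq_real, measureReal_eq_zero_iff]
    rw [hμ, Measure.map_apply (measurable_sumSq r) measurableSet_Iic]
    refine measure_mono_null ?_ (stdGaussian_sumSq_eq (r := r) 0)
    intro x hx
    exact le_antisymm (le_trans hx hq) (Finset.sum_nonneg fun i _ => sq_nonneg _)
  have hF : ∀ q, _root_.stdGaussian r {x | q < ∑ i, x i ^ 2} = ENNReal.ofReal α ↔
      cdf μ q = 1 - α := by
    intro q
    have : _root_.stdGaussian r {x | q < ∑ i, x i ^ 2} = μ (Set.Iic q)ᶜ := by
      rw [Set.compl_Iic, hμ, Measure.map_apply (measurable_sumSq r) measurableSet_Ioi]; rfl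
    rw [this, cdf_eq_real, ← ofReal_measureReal, probReal_compl_eq_one_sub measurableSet_Iic,
      ENNReal.ofReal_eq_ofReal_iff (sub_nonneg.2 measureReal_le_one) hα.le]
    constructor <;> intro h <;> linarith
  have hset : {q : ℝ | 0 < q ∧ _root_.stdGaussian r {x | q < ∑ i, x i ^ 2} = ENNReal.ofReal α}
      = cdf μ ⁻¹' {1 - α} := by
    ext q
    simp only [Set.mem_ofPred_eq, hF, Set.mem_preimage, Set.mem_singleton_iff,
      and_iff_right_iff_imp]
    intro h
    by_contra hq
    linarith [h0 q (not_lt.1 hq)]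
  have hne : (cdf μ ⁻¹' {1 - α}).Nonempty := by
    obtain ⟨b, hb⟩ := ((tendsto_cdf_atTop μ).eventually (lt_mem_nhds (by linarith :
      1 - α < 1))).exists
    exact mem_range_of_exists_le_of_exists_ge hcont ⟨0, by rw [h0 0 le_rfl]; linarith⟩
      ⟨b, hb.le⟩
  have hmem := (isClosed_singleton.preimage hcont).csInf_mem hne
    ⟨0, fun q hq => (hset.symm ▸ hq : q ∈ {q : ℝ | 0 < q ∧ _}).1.le⟩
  rw [hF, chiSqCrit, if_neg (NeZero.ne r), hset]
  exact hmem

end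

/-- Let `V ⊆ ℝ^r` be a Borel-measurable cone with polar cone `V*`, let
`γ ∈ V*`, `α ∈ (0,1)`, and let `Y = γ + Z` with `Z` standard Gaussian in `ℝ^r`. Then
`P(Y ∈ V ∧ ‖Y‖² > χ²_{r,1-α}) ≤ α · P(Y ∈ V)`, with equality if `γ = 0`. -/
theorem statement13 {r : ℕ} (hr : 1 ≤ r)
    (V : Set (Fin r → ℝ)) (hVmeas : MeasurableSet V)
    (hcone : ∀ v ∈ V, ∀ c : ℝ, 0 ≤ c → c • v ∈ V)
    (γ : Fin r → ℝ) (hγ : ∀ y ∈ V, ∑ i, y i * γ i ≤ 0)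
    {α : ℝ} (hα : 0 < α) (hα1 : α < 1)
    (P : Measure (Fin r → ℝ)) (hP : P = (stdGaussian r).map fun z => γ + z) :
    P (V ∩ {y | chiSqCrit r α < ∑ i, y i ^ 2}) ≤ ENNReal.ofReal α * P V ∧
      (γ = 0 → P (V ∩ {y | chiSqCrit r α < ∑ i, y i ^ 2}) = ENNReal.ofReal α * P V) := by
  have : NeZero r := ⟨by omega⟩
  have hpr : IsProbabilityMeasure (_root_.stdGaussian r) := by
    unfold _root_.stdGaussian; infer_instance
  rw [map_add_stdGaussian] at hP
  set G := _root_.stdGaussian r with hG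
  set q := chiSqCrit r α with hq
  set A : Set (Fin r → ℝ) := {y | q < ∑ i, y i ^ 2} with hA
  have hAm : MeasurableSet A := measurable_sumSq r measurableSet_Ioi
  have hGA : G A = ENNReal.ofReal α := stdGaussian_chiSqCrit hα hα1
  have hGAc : G Aᶜ = ENNReal.ofReal (1 - α) := by
    rw [prob_compl_eq_one_sub hAm, hGA, ENNReal.ofReal_sub _ hα.le, ENNReal.ofReal_one]
  have hadd : ENNReal.ofReal α + ENNReal.ofReal (1 - α) = 1 := by
    rw [← ENNReal.ofReal_add hα.le (by linarith)]; simp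
  have hVs : ∀ t : ℝ, 0 < t → ∀ x, t • x ∈ V ↔ x ∈ V := fun t ht x =>
    ⟨fun h => by simpa [smul_smul, ht.ne'] using hcone _ h t⁻¹ (inv_pos.2 ht).le,
      fun h => hcone x h t ht.le⟩
  have hind : ∀ f : (Fin r → ℝ) → ℝ≥0∞, (∀ t : ℝ, 0 < t → ∀ x, f (t • x) = f x) →
      ∀ t : ℝ, 0 < t → ∀ x, V.indicator f (t • x) = V.indicator f x := by
    intro f hf t ht x
    by_cases hx : x ∈ V
    · rw [Set.indicator_of_mem hx, Set.indicator_of_mem ((hVs t ht x).2 hx), hf t ht]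
    · rw [Set.indicator_of_notMem hx,
        Set.indicator_of_notMem (fun h => hx ((hVs t ht x).1 h))]
  have hA1 : ∀ g : (Fin r → ℝ) → ℝ≥0∞, Measurable g →
      (∀ t : ℝ, 0 < t → ∀ x, g (t • x) = g x) →
      ∫⁻ x in A, g x ∂G = ENNReal.ofReal α * ∫⁻ x, g x ∂G := fun g hg hom => by
    rw [← hGA]; exact lintegral_gaussian_of_homogeneous g hg hom measurableSet_Ioi
  have hA2 : ∀ g : (Fin r → ℝ) → ℝ≥0∞, Measurable g →
      (∀ t : ℝ, 0 < t → ∀ x, g (t • x) = g x) →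
      ∫⁻ x in Aᶜ, g x ∂G = ENNReal.ofReal (1 - α) * ∫⁻ x, g x ∂G := fun g hg hom => by
    rw [← hGAc]; exact lintegral_gaussian_of_homogeneous g hg hom measurableSet_Ioi.compl
  constructor
  · set h : (Fin r → ℝ) → ℝ≥0∞ :=
      fun x => ENNReal.ofReal (Real.exp (∑ i, x i * γ i - (∑ i, γ i ^ 2) / 2)) with hh
    set N : (Fin r → ℝ) → ℝ := fun x => √(∑ i, x i ^ 2) with hN
    -- `w` agrees with `h` on the sphere `‖x‖² = q` and is constant along rays.
    set w : (Fin r → ℝ) → ℝ≥0∞ := fun x => ENNReal.ofReal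
      (Real.exp (√q / N x * (∑ i, x i * γ i) - (∑ i, γ i ^ 2) / 2)) with hw
    have hwm : Measurable w := by simp only [hw, hN]; fun_prop
    have hhm : Measurable h := by simp only [hh]; fun_prop
    have hwhom : ∀ t : ℝ, 0 < t → ∀ x, w (t • x) = w x := by
      intro t ht x
      have e1 : N (t • x) = t * N x := by
        simp only [hN, Pi.smul_apply, smul_eq_mul, mul_pow, ← Finset.mul_sum]
        rw [Real.sqrt_mul (sq_nonneg t), Real.sqrt_sq ht.le]
      have e2 : ∑ i, (t • x) i * γ i = t * ∑ i, x i * γ i := by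
        simp only [Pi.smul_apply, smul_eq_mul, Finset.mul_sum, mul_assoc]
      simp only [hw, e1, e2]
      congr 3
      rw [div_mul_eq_mul_div, div_mul_eq_mul_div, mul_left_comm,
        mul_div_mul_left _ _ ht.ne']
    have hghom := hind w hwhom
    have hle1 : ∀ x ∈ A, V.indicator h x ≤ V.indicator w x := by
      intro x hx
      refine Set.indicator_le_indicator' fun hxV => ?_
      have hs : √q ≤ N x := Real.sqrt_le_sqrt (le_of_lt hx)
      have : √q / N x ≤ 1 := div_le_one_of_le₀ hs (Real.sqrt_nonneg _)
      refine ENNReal.ofReal_le_ofReal (Real.exp_le_exp.2 ?_)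
      nlinarith [hγ x hxV]
    have hle2 : ∀ x ∈ Aᶜ, V.indicator w x ≤ V.indicator h x := by
      intro x hx
      refine Set.indicator_le_indicator' fun hxV => ?_
      refine ENNReal.ofReal_le_ofReal (Real.exp_le_exp.2 ?_)
      have hs : N x ≤ √q := Real.sqrt_le_sqrt (not_lt.1 hx)
      rcases (Real.sqrt_nonneg _ : 0 ≤ N x).eq_or_lt with h0 | h0
      · -- Here `x = 0`, so both exponents agree although `√q / N x` is a division by zero.
        have hx0 : ∑ i, x i ^ 2 = 0 :=
          (Real.sqrt_eq_zero (Finset.sum_nonneg fun i _ => sq_nonneg _)).1 h0.symm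
        have : ∀ i, x i = 0 := fun i => by
          simpa using (Finset.sum_eq_zero_iff_of_nonneg fun i _ => sq_nonneg (x i)).1 hx0 i
            (Finset.mem_univ i)
        simp [this]
      · have : 1 ≤ √q / N x := (one_le_div h0).2 hs
        nlinarith [hγ x hxV]
    have hPs : ∀ s, MeasurableSet s → P (V ∩ s) = ∫⁻ x in s, V.indicator h x ∂G := by
      intro s hs
      rw [hP, withDensity_apply _ (hVmeas.inter hs), lintegral_indicator hVmeas,
        Measure.restrict_restrict hVmeas]
    set a := ENNReal.ofReal α
    set b := ENNReal.ofReal (1 - α)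
    have hgm := hwm.indicator hVmeas
    have hkey : b * P (V ∩ A) ≤ a * P (V ∩ Aᶜ) := by
      rw [hPs A hAm, hPs Aᶜ hAm.compl]
      calc b * ∫⁻ x in A, V.indicator h x ∂G ≤ b * ∫⁻ x in A, V.indicator w x ∂G := by
            refine mul_le_mul_right ?_ _
            exact setLIntegral_mono hgm hle1
        _ = a * ∫⁻ x in Aᶜ, V.indicator w x ∂G := by
            rw [hA1 _ hgm hghom, hA2 _ hgm hghom]; ring
        _ ≤ _ := by
            refine mul_le_mul_right ?_ _
            exact setLIntegral_mono (hhm.indicator hVmeas) hle2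
    calc P (V ∩ A) = a * P (V ∩ A) + b * P (V ∩ A) := by rw [← add_mul, hadd, one_mul]
      _ ≤ a * P (V ∩ A) + a * P (V ∩ Aᶜ) := by gcongr
      _ = a * P V := by
        rw [← mul_add, ← Set.sdiff_eq, measure_inter_add_sdiff _ hAm]
  · intro h0
    have hPG : P = G := by rw [hP, h0]; simp
    rw [hPG]
    have := hA1 _ (measurable_one.indicator hVmeas) (hind 1 fun _ _ _ => rfl)
    rwa [lintegral_indicator_one hVmeas, lintegral_indicator_one hVmeas,
      Measure.restrict_apply hVmeas] at this
end

section
/- Let μ ≤ 0, τ ≥ 0, α ∈ (0,1/2], and β = 2αΦ(τ), where Φ is the standard normal cumulative distribution function. Let z_{1−β/2} denote the 1−β/2 quantile of the standard normal distribution, i.e. the unique real number with Φ(z_{1−β/2}) = 1 − β/2. If Z is a real random variable with the Gaussian law of mean μ and variance 1, then P(Z > z_{1−β/2} and Z > −τ) ≤ α·P(Z > −τ), with equality if μ = 0. -/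
/-!
The family `N(μ, 1)` has monotone likelihood ratio: the density of `N(μ, 1)` relative to `N(0, 1)`
is `w t = exp (μ t - μ² / 2)`, which is antitone for `μ ≤ 0`. Write `A = (z, ∞)` and `B = (-τ, z]`.
By symmetry of the standard Gaussian, the choice of `z` says `P₀ A = α P₀ (-τ, ∞)`; as `α < 1` and
`P₀ (-τ, ∞) > 0` this forces `-τ < z`, so `(-τ, ∞) = A ⊔ B` and `(1 - α) P₀ A = α P₀ B`. Since
`w ≤ w z` on `A` and `w ≥ w z` on `B`,
`(1 - α) P_μ A ≤ w z (1 - α) P₀ A = w z α P₀ B ≤ α P_μ B`,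
which is the claim. For `μ = 0` it is the identity `P₀ A = α P₀ (-τ, ∞)`.
-/

open MeasureTheory ProbabilityTheory
open scoped ENNReal

noncomputable section

/-- The standard normal cumulative distribution function. -/
def Phi (t : ℝ) : ℝ := (gaussianReal 0 1 (Set.Iic t)).toReal

end

/-- The likelihood ratio of `N(μ, 1)` with respect to the standard Gaussian. -/
noncomputable def likelihoodRatio (μ t : ℝ) : ℝ := Real.exp (μ * t - μ ^ 2 / 2)

lemma likelihoodRatio_antitone {μ : ℝ} (hμ : μ ≤ 0) : Antitone (likelihoodRatio μ) := by
  intro s t hst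
  unfold likelihoodRatio
  have := mul_le_mul_of_nonpos_left hst hμ
  gcongr

lemma gaussianPDFReal_eq_likelihoodRatio_mul (μ t : ℝ) :
    gaussianPDFReal μ 1 t = likelihoodRatio μ t * gaussianPDFReal 0 1 t := by
  simp only [gaussianPDFReal, likelihoodRatio, NNReal.coe_one]
  rw [mul_left_comm, ← Real.exp_add]
  ring_nf

lemma real_gaussianReal_eq_setIntegral (μ : ℝ) (S : Set ℝ) :
    (gaussianReal μ 1).real S = ∫ t in S, gaussianPDFReal μ 1 t := by
  rw [measureReal_def, gaussianReal_apply_eq_integral μ one_ne_zero, ENNReal.toReal_ofReal]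
  exact integral_nonneg fun t => gaussianPDFReal_nonneg μ 1 t

lemma real_gaussianReal_le_mul {μ c : ℝ} {S : Set ℝ} (hS : MeasurableSet S)
    (h : ∀ t ∈ S, likelihoodRatio μ t ≤ c) :
    (gaussianReal μ 1).real S ≤ c * (gaussianReal 0 1).real S := by
  rw [real_gaussianReal_eq_setIntegral, real_gaussianReal_eq_setIntegral, ← integral_const_mul]
  refine setIntegral_mono_on (integrable_gaussianPDFReal μ 1).integrableOn
    ((integrable_gaussianPDFReal 0 1).const_mul c).integrableOn hS fun t ht => ?_
  rw [gaussianPDFReal_eq_likelihoodRatio_mul]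
  exact mul_le_mul_of_nonneg_right (h t ht) (gaussianPDFReal_nonneg 0 1 t)

lemma mul_le_real_gaussianReal {μ c : ℝ} {S : Set ℝ} (hS : MeasurableSet S)
    (h : ∀ t ∈ S, c ≤ likelihoodRatio μ t) :
    c * (gaussianReal 0 1).real S ≤ (gaussianReal μ 1).real S := by
  rw [real_gaussianReal_eq_setIntegral, real_gaussianReal_eq_setIntegral, ← integral_const_mul]
  refine setIntegral_mono_on ((integrable_gaussianPDFReal 0 1).const_mul c).integrableOn
    (integrable_gaussianPDFReal μ 1).integrableOn hS fun t ht => ?_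
  rw [gaussianPDFReal_eq_likelihoodRatio_mul μ]
  exact mul_le_mul_of_nonneg_right (h t ht) (gaussianPDFReal_nonneg 0 1 t)

lemma real_gaussianReal_Ioi_neg (τ : ℝ) : (gaussianReal 0 1).real (Set.Ioi (-τ)) = Phi τ := by
  have := nullSingletonClass_gaussianReal (μ := 0) (v := 1) one_ne_zero
  rw [measureReal_def, Phi, measure_congr (Ioi_ae_eq_Ici (μ := gaussianReal 0 1) (a := -τ))]
  conv_rhs => rw [← neg_zero, ← gaussianReal_map_neg]
  rw [Measure.map_apply measurable_neg measurableSet_Iic]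
  simp

lemma real_gaussianReal_Ioi (z : ℝ) : (gaussianReal 0 1).real (Set.Ioi z) = 1 - Phi z := by
  rw [← Set.compl_Iic, probReal_compl_eq_one_sub measurableSet_Iic]
  rfl

lemma Phi_pos (τ : ℝ) : 0 < Phi τ := by
  refine ENNReal.toReal_pos (fun h => ?_) (measure_ne_top _ _)
  have := gaussianReal_absolutelyContinuous' 0 one_ne_zero h
  simp at this

/-- Let `μ ≤ 0`, `τ ≥ 0`, `α ∈ (0, 1/2]`, `β = 2αΦ(τ)`, and let
`z_{1-β/2}` be the `1-β/2` quantile of the standard normal distribution (the unique real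
with `Φ(z) = 1 - β/2`). If `Z ∼ N(μ, 1)` then
`P(Z > z_{1-β/2} ∧ Z > -τ) ≤ α · P(Z > -τ)`, with equality if `μ = 0`. -/
theorem statement14 {μ τ α : ℝ} (hμ : μ ≤ 0) (hτ : 0 ≤ τ) (hα : 0 < α) (hα' : α ≤ 1 / 2)
    (β : ℝ) (hβ : β = 2 * α * Phi τ)
    (z : ℝ) (hz : Phi z = 1 - β / 2) :
    gaussianReal μ 1 {t | z < t ∧ -τ < t} ≤
        ENNReal.ofReal α * gaussianReal μ 1 {t | -τ < t} ∧
      (μ = 0 → gaussianReal μ 1 {t | z < t ∧ -τ < t} =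
        ENNReal.ofReal α * gaussianReal μ 1 {t | -τ < t}) := by
  have hA : (gaussianReal 0 1).real (Set.Ioi z) =
      α * (gaussianReal 0 1).real (Set.Ioi (-τ)) := by
    rw [real_gaussianReal_Ioi, real_gaussianReal_Ioi_neg, hz, hβ]
    ring
  have hpos : 0 < (gaussianReal 0 1).real (Set.Ioi (-τ)) := by
    rw [real_gaussianReal_Ioi_neg]
    exact Phi_pos τ
  have hzτ : -τ < z := by
    by_contra! h
    have hle : (gaussianReal 0 1).real (Set.Ioi (-τ)) ≤ (gaussianReal 0 1).real (Set.Ioi z) :=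
      measureReal_mono (Set.Ioi_subset_Ioi h)
    nlinarith
  have hset : {t : ℝ | z < t ∧ -τ < t} = Set.Ioi z :=
    Set.ext fun t => ⟨fun h => h.1, fun h => ⟨h, hzτ.trans h⟩⟩
  have hsplit (m : ℝ) : (gaussianReal m 1).real (Set.Ioi (-τ)) =
      (gaussianReal m 1).real (Set.Ioc (-τ) z) + (gaussianReal m 1).real (Set.Ioi z) := by
    rw [← Set.Ioc_union_Ioi_eq_Ioi hzτ.le,
      measureReal_union (Set.Ioc_disjoint_Ioi le_rfl) measurableSet_Ioi]
  have hmul (m : ℝ) : ENNReal.ofReal α * gaussianReal m 1 (Set.Ioi (-τ)) =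
      ENNReal.ofReal (α * (gaussianReal m 1).real (Set.Ioi (-τ))) := by
    rw [ENNReal.ofReal_mul hα.le, ofReal_measureReal]
  rw [hset, show {t : ℝ | -τ < t} = Set.Ioi (-τ) from rfl, hmul, ← ofReal_measureReal]
  constructor
  · apply ENNReal.ofReal_le_ofReal
    have hUpper := real_gaussianReal_le_mul (μ := μ) (measurableSet_Ioi (a := z))
      fun t ht => likelihoodRatio_antitone hμ (le_of_lt ht)
    have hLower := mul_le_real_gaussianReal (μ := μ) (measurableSet_Ioc (a := -τ) (b := z))
      fun t ht => likelihoodRatio_antitone hμ ht.2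
    rw [hsplit] at hA ⊢
    have h₁ := mul_le_mul_of_nonneg_left hUpper (by linarith : 0 ≤ 1 - α)
    have h₂ := mul_le_mul_of_nonneg_left hLower hα.le
    linear_combination h₁ + h₂ + likelihoodRatio μ z * hA
  · rintro rfl
    rw [hA]
end

section
/- Let A be a d_A×d_m real matrix with rows a_1',…,a_{d_A}'. Let C = poly(A,0) = {x ∈ ℝ^{d_m} : Ax ≤ 0} and let S be the smallest linear subspace of ℝ^{d_m} containing C. Let J = {j : a_j is orthogonal to S, i.e. a_j'x = 0 for all x ∈ S}. Then S = poly(A_J,0) = {x ∈ ℝ^{d_m} : a_j'x ≤ 0 for all j ∈ J}. -/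
open Matrix

/-!
The inclusion `S ⊆ {x | ∀ j ∈ J, A j ⬝ᵥ x ≤ 0}` is immediate. For the converse, let `x` satisfy the
inequalities indexed by `J`. For each row `j` there is `y j ∈ C` with `A j ⬝ᵥ (x + y j) ≤ 0`: if
`j ∈ J` take `y j = 0`; otherwise `A j` does not vanish on `C` (else it would vanish on the span of
`C`), hence is negative somewhere on `C`, and a large multiple of such a point works. The points
`y j` lie in `C`, so adding further ones never increases any `A i ⬝ᵥ ·`. Therefore both `∑ j, y j`
and `x + ∑ j, y j` lie in `C`, and `x`, being their difference, lies in the span.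
-/

/-- Let `A` have rows `a_1, …, a_{d_A}`, let `C = {x : Ax ≤ 0}` and let
`S` be the smallest linear subspace containing `C` (the span of `C`). If
`J = {j : a_j ⊥ S}`, then `S = {x : a_jᵀ x ≤ 0 for all j ∈ J}`. -/
theorem statement19 {dA dm : ℕ} (A : Fin dA → Fin dm → ℝ)
    (C : Set (Fin dm → ℝ)) (hC : C = {x | ∀ j, A j ⬝ᵥ x ≤ 0})
    (S : Submodule ℝ (Fin dm → ℝ)) (hS : S = Submodule.span ℝ C)
    (J : Set (Fin dA)) (hJ : J = {j | ∀ y ∈ S, A j ⬝ᵥ y = 0}) :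
    (S : Set (Fin dm → ℝ)) = {x | ∀ j ∈ J, A j ⬝ᵥ x ≤ 0} := by
  have memC : ∀ x, x ∈ C ↔ ∀ j, A j ⬝ᵥ x ≤ 0 := fun x => by rw [hC]; rfl
  have memJ : ∀ j, j ∈ J ↔ ∀ y ∈ S, A j ⬝ᵥ y = 0 := fun j => by rw [hJ]; rfl
  have hCS : ∀ x ∈ C, x ∈ S := fun x hx => hS ▸ Submodule.subset_span hx
  ext x
  refine ⟨fun hx j hj => ((memJ j).1 hj x hx).le, fun hx => ?_⟩
  have key : ∀ j, ∃ y ∈ C, A j ⬝ᵥ x + A j ⬝ᵥ y ≤ 0 := by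
    intro j
    by_cases hj : j ∈ J
    · exact ⟨0, (memC 0).2 (by simp), by simpa using hx j hj⟩
    · obtain ⟨w, hw, hneg⟩ : ∃ w ∈ C, A j ⬝ᵥ w < 0 := by
        by_contra! h
        refine hj ((memJ j).2 fun y hy => ?_)
        rw [hS] at hy
        induction hy using Submodule.span_induction with
        | mem y hy => exact le_antisymm ((memC y).1 hy j) (h y hy)
        | zero => simp
        | add u v _ _ hu hv => rw [dotProduct_add, hu, hv, add_zero]
        | smul c u _ hu => rw [dotProduct_smul, hu, smul_zero]
      -- the coefficient is chosen so that `A j` takes the value `-|A j ⬝ᵥ x|` at the multiple of `w`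
      have ht : 0 ≤ |A j ⬝ᵥ x| / -(A j ⬝ᵥ w) := div_nonneg (abs_nonneg _) (by linarith)
      refine ⟨(|A j ⬝ᵥ x| / -(A j ⬝ᵥ w)) • w, (memC _).2 fun i => ?_, ?_⟩
      · rw [dotProduct_smul, smul_eq_mul]
        exact mul_nonpos_of_nonneg_of_nonpos ht ((memC w).1 hw i)
      · have e : |A j ⬝ᵥ x| / -(A j ⬝ᵥ w) * (A j ⬝ᵥ w) = -|A j ⬝ᵥ x| := by
          have := hneg.ne
          field_simp
        rw [dotProduct_smul, smul_eq_mul, e]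
        linarith [le_abs_self (A j ⬝ᵥ x)]
  choose y hyC hy using key
  have hsum : ∑ j, y j ∈ S := S.sum_mem fun j _ => hCS _ (hyC j)
  have hxsum : x + ∑ j, y j ∈ C := by
    refine (memC _).2 fun i => ?_
    rw [dotProduct_add, dotProduct_sum, ← Finset.add_sum_erase _ _ (Finset.mem_univ i)]
    have := Finset.sum_nonpos (s := Finset.univ.erase i) (f := fun j => A i ⬝ᵥ y j)
      fun j _ => (memC _).1 (hyC j) i
    linarith [hy i]
  simpa using S.sub_mem (hCS _ hxsum) hsum
end
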